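/- Let k be a number field and let (s_𝔭) be a family of nonnegative real numbers, indexed by the nonzero prime ideals 𝔭 of the ring of integers of k, that is bounded above by some constant M. For a real N ≥ 1 set C_N = Σ_{𝔭 : N(𝔭) ≤ N} s_𝔭 · log N(𝔭), D_N = Σ_{𝔭 : N(𝔭) ≤ N} s_𝔭, and π_k(N) = #{𝔭 : N(𝔭) ≤ N}, where N(𝔭) denotes the absolute norm of 𝔭 (each of these sums has finitely many terms). If D_N / π_k(N) converges to a limit L as N → ∞, then C_N / N also converges to L as N → ∞. -/

import Mathlib

section
open Filter Topology MeasureTheory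
open scoped FourierTransform

namespace PIT

lemma integrable_exp_neg_indicator {h : ℝ → ℝ} (hm : Measurable h) {B : ℝ} (hB : ∀ u, |h u| ≤ B)
    (h0 : ∀ u < 0, h u = 0) {ε : ℝ} (hε : 0 < ε) :
    Integrable (fun u => h u * Real.exp (-ε * u)) := by
  have h1 : IntegrableOn (fun u : ℝ => Real.exp (-ε * u)) (Set.Ici 0) :=
    (integrableOn_Ici_iff_integrableOn_Ioi).2 (exp_neg_integrableOn_Ioi 0 hε)
  have h2 : Integrable (fun u => B * (Set.Ici (0:ℝ)).indicator (fun u : ℝ => Real.exp (-ε * u)) u) :=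
    (h1.integrable_indicator measurableSet_Ici).const_mul B
  refine h2.mono' (by fun_prop) (Eventually.of_forall fun u => ?_)
  by_cases hu : u < 0
  · simp [h0 u hu, Set.indicator, not_le.2 hu]
  · simp only [Set.indicator, Set.mem_Ici, not_lt.1 hu, if_true, norm_mul, Real.norm_eq_abs, Real.abs_exp]
    gcongr
    exact hB u

lemma conv_eq_eps {h : ℝ → ℝ} (hm : Measurable h) {B : ℝ} (hB : ∀ u, |h u| ≤ B)
    (h0 : ∀ u < 0, h u = 0) (φ : ℝ → ℂ) (hφ : Continuous φ) (hc : HasCompactSupport φ)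
    {ε : ℝ} (hε : 0 < ε) (v : ℝ) :
    ∫ u, (h u * Real.exp (-ε * u) : ℝ) * 𝓕 φ (v - u) =
    ∫ t, Complex.exp (↑(-2 * Real.pi * t * v) * Complex.I) *
      (φ t * ∫ u, h u * Complex.exp (-(ε - 2 * Real.pi * t * Complex.I) * u)) := by
  have hφi : Integrable φ := hφ.integrable_of_hasCompactSupport hc
  have key : Integrable (Function.uncurry fun (u t : ℝ) => ((h u * Real.exp (-ε * u) : ℝ) : ℂ) *
      (Complex.exp (↑(-2 * Real.pi * (t * (v - u))) * Complex.I) * φ t)) (volume.prod volume) := by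
    have h1 := (integrable_exp_neg_indicator hm hB h0 hε).ofReal (𝕜 := ℂ)
    have h2 := h1.mul_prod hφi
    refine h2.mono (by
      apply Measurable.aestronglyMeasurable
      have := hφ.measurable
      unfold Function.uncurry
      fun_prop) (Eventually.of_forall fun p => ?_)
    simp only [Function.uncurry, norm_mul, Complex.norm_exp_ofReal_mul_I, one_mul]
    simp
  calc _ = ∫ u, ∫ t, ((h u * Real.exp (-ε * u) : ℝ) : ℂ) *
      (Complex.exp (↑(-2 * Real.pi * (t * (v - u))) * Complex.I) * φ t) := by
        congr 1; ext u
        rw [Real.fourier_eq', integral_const_mul]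
        congr 2; ext t
        simp [mul_comm]
    _ = _ := by
        rw [integral_integral_swap key]
        congr 1; ext t
        rw [← integral_const_mul, ← integral_const_mul]
        congr 1; ext u
        have : Complex.exp (↑(-2 * Real.pi * (t * (v - u))) * Complex.I) * Complex.exp (-ε * u) =
          Complex.exp (↑(-2 * Real.pi * t * v) * Complex.I) *
            Complex.exp (-(ε - 2 * Real.pi * t * Complex.I) * u) := by
          rw [← Complex.exp_add, ← Complex.exp_add]
          congr 1
          push_cast; ring
        push_cast at this ⊢
        linear_combination (↑(h u) * φ t) * this

lemma conv_eq {h : ℝ → ℝ} (hm : Measurable h) {B : ℝ} (hB : ∀ u, |h u| ≤ B)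
    (h0 : ∀ u < 0, h u = 0) (φ : ℝ → ℂ) (hφ : Continuous φ) (hc : HasCompactSupport φ)
    (hK : Integrable (𝓕 φ)) (hKc : Continuous (𝓕 φ))
    (G : ℂ → ℂ) (hG : ContinuousOn G {z | 0 ≤ z.re})
    (hGe : ∀ z : ℂ, 0 < z.re → G z = ∫ u : ℝ, h u * Complex.exp (-z * u)) (v : ℝ) :
    ∫ u, h u * 𝓕 φ (v - u) =
    ∫ t : ℝ, Complex.exp (↑(-2 * Real.pi * t * v) * Complex.I) *
      (φ t * G (-(2 * Real.pi * t * Complex.I))) := by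
  have hL : Tendsto (fun ε : ℝ => ∫ u, (h u * Real.exp (-ε * u) : ℝ) * 𝓕 φ (v - u)) (𝓝[>] 0)
      (𝓝 (∫ u, h u * 𝓕 φ (v - u))) := by
    apply tendsto_integral_filter_of_dominated_convergence (fun u => B * ‖𝓕 φ (v - u)‖)
    · refine Eventually.of_forall fun ε => ?_
      apply Measurable.aestronglyMeasurable
      have := hKc.measurable
      fun_prop
    · filter_upwards [self_mem_nhdsWithin] with ε hε
      refine Eventually.of_forall fun u => ?_
      rw [norm_mul]
      gcongr
      by_cases hu : u < 0
      · simp [h0 u hu]; exact (abs_nonneg _).trans (hB 0)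
      · simp only [Complex.norm_real, norm_mul, Real.norm_eq_abs, Real.abs_exp]
        have : Real.exp (-ε * u) ≤ 1 := by
          rw [Real.exp_le_one_iff]
          have : 0 < ε := hε
          nlinarith [mul_nonneg this.le (not_lt.1 hu)]
        calc |h u| * Real.exp (-ε * u) ≤ |h u| * 1 := by gcongr
          _ ≤ B := by simpa using hB u
    · exact ((hK.comp_sub_left v).norm).const_mul B
    · refine Eventually.of_forall fun u => ?_
      have : Continuous fun ε : ℝ => (((h u * Real.exp (-ε * u) : ℝ) : ℂ) * 𝓕 φ (v - u)) := by fun_prop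
      have := (this.tendsto 0).mono_left (nhdsWithin_le_nhds (s := Set.Ioi 0))
      simpa using this
  have hR : Tendsto (fun ε : ℝ => ∫ t : ℝ, Complex.exp (↑(-2 * Real.pi * t * v) * Complex.I) *
      (φ t * G (ε - 2 * Real.pi * t * Complex.I))) (𝓝[>] 0)
      (𝓝 (∫ t : ℝ, Complex.exp (↑(-2 * Real.pi * t * v) * Complex.I) *
      (φ t * G (-(2 * Real.pi * t * Complex.I))))) := by
    let S : Set (ℝ × ℝ) := Set.Icc (0:ℝ) 1 ×ˢ tsupport φ
    have hS : IsCompact S := isCompact_Icc.prod hc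
    have hcont : ContinuousOn (fun p : ℝ × ℝ => G (p.1 - 2 * Real.pi * p.2 * Complex.I)) {p | 0 ≤ p.1} := by
      apply hG.comp
      · apply Continuous.continuousOn; fun_prop
      · intro p hp; simpa using hp
    obtain ⟨C, hC⟩ := hS.exists_bound_of_continuousOn (hcont.mono (fun p hp => hp.1.1))
    apply tendsto_integral_filter_of_dominated_convergence (fun t => C * ‖φ t‖)
    · filter_upwards [self_mem_nhdsWithin] with ε hε
      apply Continuous.aestronglyMeasurable
      have : Continuous fun t : ℝ => G (ε - 2 * Real.pi * t * Complex.I) := by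
        have := hcont.comp_continuous (f := fun t : ℝ => ((ε, t) : ℝ × ℝ)) (by fun_prop)
          (fun t => (le_of_lt hε : (0:ℝ) ≤ ε))
        exact this
      exact (by fun_prop : Continuous fun t : ℝ =>
        Complex.exp (↑(-2 * Real.pi * t * v) * Complex.I)).mul (hφ.mul this)
    · have : Set.Ioc (0:ℝ) 1 ∈ 𝓝[>] (0:ℝ) := Ioc_mem_nhdsGT one_pos
      filter_upwards [this] with ε hε
      refine Eventually.of_forall fun t => ?_
      rw [norm_mul, Complex.norm_exp_ofReal_mul_I, one_mul, norm_mul, mul_comm]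
      by_cases ht : φ t = 0
      · simp [ht]
      · gcongr
        exact hC (ε, t) ⟨⟨hε.1.le, hε.2⟩, subset_tsupport _ ht⟩
    · exact (hφ.integrable_of_hasCompactSupport hc).norm.const_mul C
    · refine Eventually.of_forall fun t => ?_
      have h1 := (hcont (0, t) (by simp)).tendsto
      have h2 : Tendsto (fun ε : ℝ => ((ε, t) : ℝ × ℝ)) (𝓝[>] 0) (𝓝[{p : ℝ × ℝ | 0 ≤ p.1}] (0, t)) := by
        apply tendsto_nhdsWithin_of_tendsto_nhds_of_eventually_within
        · exact ((by fun_prop : Continuous fun ε : ℝ => ((ε, t) : ℝ × ℝ)).tendsto 0).mono_left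
            nhdsWithin_le_nhds
        · filter_upwards [self_mem_nhdsWithin] with ε hε
          exact (le_of_lt hε : (0:ℝ) ≤ ε)
      have h3 := h1.comp h2
      simp only [Function.comp_def, Complex.ofReal_zero, zero_sub] at h3
      exact (h3.const_mul _).const_mul _
  refine tendsto_nhds_unique hL (hR.congr' ?_)
  filter_upwards [self_mem_nhdsWithin] with ε hε
  rw [conv_eq_eps hm hB h0 φ hφ hc hε v]
  congr 1; ext t
  congr 2
  rw [hGe _ (by simpa using hε)]

lemma conv_tendsto {h : ℝ → ℝ} (hm : Measurable h) {B : ℝ} (hB : ∀ u, |h u| ≤ B)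
    (h0 : ∀ u < 0, h u = 0) (φ : ℝ → ℂ) (hφ : Continuous φ) (hc : HasCompactSupport φ)
    (hK : Integrable (𝓕 φ)) (hKc : Continuous (𝓕 φ))
    (G : ℂ → ℂ) (hG : ContinuousOn G {z | 0 ≤ z.re})
    (hGe : ∀ z : ℂ, 0 < z.re → G z = ∫ u : ℝ, h u * Complex.exp (-z * u)) :
    Tendsto (fun v : ℝ => ∫ u, h u * 𝓕 φ (v - u)) atTop (𝓝 0) := by
  have := (Real.zero_at_infty_fourier (fun t : ℝ => φ t * G (-(2 * Real.pi * t * Complex.I)))).mono_left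
    atTop_le_cocompact
  refine this.congr fun v => ?_
  rw [conv_eq hm hB h0 φ hφ hc hK hKc G hG hGe v, Real.fourier_eq']
  congr 1; ext t
  simp [mul_comm, mul_assoc]

end PIT
open Filter Topology MeasureTheory
open scoped FourierTransform

namespace PIT

lemma exists_kernel : ∃ K : ℝ → ℂ, Continuous K ∧ Integrable K ∧ Integrable (fun x => |x| * ‖K x‖) ∧
    ∫ x, K x = 1 ∧ ∀ l : ℝ, 0 < l → ∃ φ : ℝ → ℂ, Continuous φ ∧ HasCompactSupport φ ∧
      𝓕 φ = fun x => l * K (l * x) := by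
  let f : ContDiffBump (0:ℝ) := ⟨1, 2, one_pos, by norm_num⟩
  let φ : ℝ → ℂ := fun t => (f t : ℂ)
  have hc : HasCompactSupport φ := f.hasCompactSupport.comp_left (g := fun x : ℝ => (x : ℂ)) (by simp)
  have hd : ContDiff ℝ (⊤ : ℕ∞) φ := Complex.ofRealCLM.contDiff.comp f.contDiff
  let φS := hc.toSchwartzMap hd
  have hφS : (φS : ℝ → ℂ) = φ := rfl
  let KS := 𝓕 φS
  have hKS : (KS : ℝ → ℂ) = 𝓕 φ := by
    rw [← hφS]; exact SchwartzMap.fourier_coe φS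
  refine ⟨KS, KS.continuous, KS.integrable, ?_, ?_, ?_⟩
  · simpa using KS.integrable_pow_mul volume 1
  · have h1 : 𝓕⁻ (𝓕 φ) = φ := Continuous.fourierInv_fourier_eq hd.continuous
      (hd.continuous.integrable_of_hasCompactSupport hc) (hKS ▸ KS.integrable)
    have h2 := congrFun h1 0
    rw [← hKS, Real.fourierInv_eq'] at h2
    simp only [inner_zero_right, mul_zero, Complex.ofReal_zero, zero_mul, Complex.exp_zero, one_smul] at h2
    rw [h2]
    have : f 0 = 1 := f.one_of_mem_closedBall (by simp [f])
    simp [φ, this]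
  · intro l hl
    refine ⟨fun t => φ (t / l), by have := hd.continuous; fun_prop, ?_, ?_⟩
    · have := hc.comp_homeomorph (Homeomorph.mulRight₀ l⁻¹ (by positivity))
      simpa [Function.comp_def, div_eq_mul_inv] using this
    · ext x
      rw [hKS, Real.fourier_eq', Real.fourier_eq']
      have := Measure.integral_comp_div (fun s : ℝ => Complex.exp (↑(-2 * Real.pi * inner ℝ (s * l) x) * Complex.I) • φ s) l
      rw [abs_of_pos hl] at this
      convert! this using 1
      · congr 1; ext v
        rw [div_mul_cancel₀ _ hl.ne']
      · rw [Complex.real_smul]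
        congr 2; ext v
        congr 4
        simp; ring

end PIT

namespace PIT

lemma intInt {h : ℝ → ℝ} (hm : Measurable h) {B : ℝ} (hB : ∀ u, |h u| ≤ B) (a b : ℝ) :
    IntervalIntegrable h volume a b := by
  rw [intervalIntegrable_iff]
  exact Measure.integrableOn_of_bounded (M := B) (by simp) hm.aestronglyMeasurable
    (Eventually.of_forall hB)

lemma avg_lip {h : ℝ → ℝ} (hm : Measurable h) {B : ℝ} (hB : ∀ u, |h u| ≤ B) (η v x : ℝ) :
    |(∫ y in (0:ℝ)..η, h (v - x + y)) - ∫ y in (0:ℝ)..η, h (v + y)| ≤ 2 * B * |x| := by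
  have e1 : ∀ w, ∫ y in (0:ℝ)..η, h (w + y) = ∫ y in w..(w + η), h y := by
    intro w; rw [intervalIntegral.integral_comp_add_left]; simp
  rw [e1, e1, intervalIntegral.integral_interval_sub_interval_comm (intInt hm hB _ _) (intInt hm hB _ _)
    (intInt hm hB _ _)]
  have a1 : |∫ y in (v - x)..v, h y| ≤ B * |x| := by
    have := intervalIntegral.norm_integral_le_of_norm_le_const (a := v - x) (b := v) (f := h) (C := B)
      (fun u _ => hB u)
    simpa using this
  have a2 : |∫ y in (v - x + η)..(v + η), h y| ≤ B * |x| := by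
    have := intervalIntegral.norm_integral_le_of_norm_le_const (a := v - x + η) (b := v + η) (f := h) (C := B)
      (fun u _ => hB u)
    convert! this using 3; ring
  calc _ ≤ |∫ y in (v - x)..v, h y| + |∫ y in (v - x + η)..(v + η), h y| := abs_sub _ _
    _ ≤ _ := by linarith

lemma avg_swap {h : ℝ → ℝ} (hm : Measurable h) {B : ℝ} (hB : ∀ u, |h u| ≤ B) (K : ℝ → ℂ)
    (hK : Integrable K) {η : ℝ} (hη : 0 < η) (v : ℝ) :
    ∫ y in (0:ℝ)..η, (∫ u, h u * K (v + y - u)) =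
      ∫ x, ((∫ y in (0:ℝ)..η, h (v - x + y) : ℝ) : ℂ) * K x := by
  have e1 : ∀ y, ∫ u, h u * K (v + y - u) = ∫ x, h (v + y - x) * K x := by
    intro y
    rw [← integral_sub_left_eq_self _ volume (v + y)]
    simp
  simp_rw [e1]
  rw [intervalIntegral.integral_of_le hη.le, integral_integral_swap]
  · congr 1; ext x
    rw [intervalIntegral.integral_of_le hη.le, integral_mul_const, ← integral_complex_ofReal]
    congr 2; ext y; congr 2; ring
  · have h1 : Integrable (fun p : ℝ × ℝ => B * ‖K p.2‖) ((volume.restrict (Set.Ioc 0 η)).prod volume) := by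
      have : Integrable (fun _ : ℝ => B) (volume.restrict (Set.Ioc 0 η)) := integrable_const B
      exact this.mul_prod hK.norm
    refine h1.mono' ?_ (Eventually.of_forall fun p => ?_)
    · apply AEStronglyMeasurable.mul
      · apply Measurable.aestronglyMeasurable; fun_prop
      · exact hK.aestronglyMeasurable.comp_snd
    · simp only [Function.uncurry, norm_mul, Complex.norm_real, Real.norm_eq_abs]
      gcongr
      exact hB _

lemma avg_tendsto {h : ℝ → ℝ} (hm : Measurable h) {B : ℝ} (hB : ∀ u, |h u| ≤ B)
    (h0 : ∀ u < 0, h u = 0)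
    (G : ℂ → ℂ) (hG : ContinuousOn G {z | 0 ≤ z.re})
    (hGe : ∀ z : ℂ, 0 < z.re → G z = ∫ u : ℝ, h u * Complex.exp (-z * u)) {η : ℝ} (hη : 0 < η) :
    Tendsto (fun v : ℝ => ∫ y in (0:ℝ)..η, h (v + y)) atTop (𝓝 0) := by
  obtain ⟨K, Kc, Ki, Kx, K1, Kφ⟩ := exists_kernel
  have B0 : 0 ≤ B := (abs_nonneg _).trans (hB 0)
  set C := ∫ x, |x| * ‖K x‖ with hC
  have C0 : 0 ≤ C := integral_nonneg fun x => by positivity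
  rw [Metric.tendsto_atTop]
  intro ε hε
  obtain ⟨l, hl, hlε⟩ : ∃ l : ℝ, 0 < l ∧ 2 * B * C / l < ε / 2 := by
    refine ⟨4 * (B * C + 1) / ε, by positivity, ?_⟩
    rw [div_lt_iff₀ (by positivity)]
    field_simp
    nlinarith [mul_nonneg B0 C0]
  obtain ⟨φ, hφc, hφs, hφK⟩ := Kφ l hl
  set Kl : ℝ → ℂ := fun x => l * K (l * x) with hKl
  have Kli : Integrable Kl := (Ki.comp_mul_left' hl.ne').const_mul _
  have Klc : Continuous Kl := by fun_prop
  have Kl1 : ∫ x, Kl x = 1 := by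
    rw [hKl, integral_const_mul, Measure.integral_comp_mul_left K l, K1, abs_of_pos (by positivity)]
    simp [hl.ne']
  have Klx : Integrable (fun x => |x| * ‖Kl x‖) := by
    have := Kx.comp_mul_left' hl.ne'
    refine this.congr (Eventually.of_forall fun x => ?_)
    simp only [hKl, norm_mul, Complex.norm_real, Real.norm_eq_abs, abs_mul]; ring
  have KlC : ∫ x, |x| * ‖Kl x‖ = C / l := by
    have := Measure.integral_comp_mul_left (fun x => |x| * ‖K x‖) l
    rw [abs_of_pos (by positivity), ← hC, smul_eq_mul] at this
    rw [div_eq_inv_mul, ← this]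
    congr 1; ext x
    simp only [hKl, norm_mul, Complex.norm_real, Real.norm_eq_abs, abs_mul]; ring
  have ct := conv_tendsto hm hB h0 φ hφc hφs (hφK ▸ Kli) (hφK ▸ Klc) G hG hGe
  rw [hφK] at ct
  rw [Metric.tendsto_atTop] at ct
  obtain ⟨V, hV⟩ := ct (ε / (2 * η)) (by positivity)
  refine ⟨V, fun v hv => ?_⟩
  have b1 : ‖∫ y in (0:ℝ)..η, (∫ u, h u * Kl (v + y - u))‖ ≤ ε / 2 := by
    have := intervalIntegral.norm_integral_le_of_norm_le_const (a := 0) (b := η)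
      (f := fun y => ∫ u, h u * Kl (v + y - u)) (C := ε / (2 * η)) (by
        intro y hy
        rw [Set.uIoc_of_le hη.le] at hy
        have := hV (v + y) (by linarith [hy.1])
        rw [dist_zero_right] at this
        exact this.le)
    refine this.trans (le_of_eq ?_)
    rw [sub_zero, abs_of_pos hη]; field_simp
  rw [avg_swap hm hB Kl Kli hη v] at b1
  set H : ℝ → ℝ := fun v => ∫ y in (0:ℝ)..η, h (v + y) with hH
  have Hm : Continuous H := by
    have : LipschitzWith (2 * ⟨B, B0⟩) H := by
      apply LipschitzWith.of_dist_le_mul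
      intro a b
      have := avg_lip hm hB η b (b - a)
      rw [sub_sub_cancel, abs_sub_comm b a] at this
      exact this
    exact this.continuous
  have Hb : ∀ v, |H v| ≤ B * η := by
    intro v
    have := intervalIntegral.norm_integral_le_of_norm_le_const (a := 0) (b := η)
      (f := fun y => h (v + y)) (C := B) (fun y _ => hB _)
    rwa [sub_zero, abs_of_pos hη] at this
  have i1 : Integrable (fun x => ((H (v - x) : ℝ) : ℂ) * Kl x) := by
    refine (Kli.norm.const_mul (B * η)).mono' (by apply Continuous.aestronglyMeasurable; fun_prop)
      (Eventually.of_forall fun x => ?_)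
    rw [norm_mul, Complex.norm_real]
    gcongr
    exact Hb _
  have b2 : ‖(∫ x, ((H (v - x) : ℝ) : ℂ) * Kl x) - H v‖ ≤ 2 * B * C / l := by
    have : (H v : ℂ) = ∫ x, (H v : ℂ) * Kl x := by rw [integral_const_mul, Kl1, mul_one]
    rw [this, ← integral_sub i1 (Kli.const_mul _)]
    calc _ ≤ ∫ x, 2 * B * (|x| * ‖Kl x‖) := by
          apply norm_integral_le_of_norm_le (Klx.const_mul _) (Eventually.of_forall fun x => ?_)
          rw [← sub_mul, norm_mul, ← Complex.ofReal_sub, Complex.norm_real, ← mul_assoc]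
          gcongr
          exact avg_lip hm hB η v x
      _ = _ := by rw [integral_const_mul, KlC]; ring
  rw [dist_zero_right, ← Complex.norm_real]
  calc ‖(H v : ℂ)‖ = ‖(∫ x, ((H (v - x) : ℝ) : ℂ) * Kl x) - ((∫ x, ((H (v - x) : ℝ) : ℂ) * Kl x) - H v)‖ := by
        congr 1; ring
    _ ≤ _ := norm_sub_le _ _
    _ < ε := by linarith

/-- Tauberian theorem. -/
theorem tauber {θ : ℝ → ℝ} (hθ : Monotone θ) {B : ℝ} (hB : ∀ x, 1 ≤ x → |θ x| ≤ B * x)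
    (G : ℂ → ℂ) (hG : ContinuousOn G {z | 0 ≤ z.re})
    (hGe : ∀ z : ℂ, 0 < z.re → G z = ∫ u in Set.Ici (0:ℝ),
      ((θ (Real.exp u) * Real.exp (-u) - 1 : ℝ) : ℂ) * Complex.exp (-z * u)) :
    Tendsto (fun x => θ x / x) atTop (𝓝 1) := by
  set f : ℝ → ℝ := fun u => θ (Real.exp u) * Real.exp (-u) with hf
  let h : ℝ → ℝ := (Set.Ici (0:ℝ)).indicator (fun u => f u - 1)
  have hfm : Measurable f := by
    have := hθ.measurable
    fun_prop
  have hm : Measurable h := Measurable.indicator (by fun_prop) measurableSet_Ici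
  have hh : ∀ u, 0 ≤ u → h u = f u - 1 := fun u hu => by simp [h, hu]
  have hfB : ∀ u, 0 ≤ u → |f u| ≤ B := by
    intro u hu
    have := hB (Real.exp u) (Real.one_le_exp hu)
    simp only [hf, abs_mul, Real.abs_exp]
    calc _ ≤ B * Real.exp u * Real.exp (-u) := by gcongr
      _ = B := by rw [mul_assoc, ← Real.exp_add]; simp
  have hhB : ∀ u, |h u| ≤ B + 1 := by
    intro u
    by_cases hu : 0 ≤ u
    · rw [hh u hu]
      calc _ ≤ |f u| + |1| := abs_sub _ _
        _ ≤ _ := by have := hfB u hu; simp [this]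
    · simp [h, hu]
      have := (abs_nonneg _).trans (hfB 0 le_rfl)
      linarith
  have h0 : ∀ u < 0, h u = 0 := fun u hu => by simp [h, hu]
  have key : ∀ η, 0 < η → Tendsto (fun v : ℝ => ∫ y in (0:ℝ)..η, h (v + y)) atTop (𝓝 0) := by
    intro η hη
    refine avg_tendsto hm hhB h0 G hG (fun z hz => ?_) hη
    rw [hGe z hz, ← integral_indicator measurableSet_Ici]
    congr 1; ext u
    by_cases hu : 0 ≤ u <;> simp [Set.indicator, h, hu, hf]
  have fm : ∀ u w, u ≤ w → f u * Real.exp (-(w - u)) ≤ f w := by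
    intro u w huw
    simp only [hf]
    rw [mul_assoc, ← Real.exp_add]
    have : -u + -(w - u) = -w := by ring
    rw [this]
    gcongr
    exact hθ (Real.exp_le_exp.2 huw)
  have hIntg : ∀ v η, 0 ≤ v → 0 < η → (∫ y in (0:ℝ)..η, h (v + y)) = (∫ y in (0:ℝ)..η, f (v + y)) - η := by
    intro v η hv hη
    have : (∫ y in (0:ℝ)..η, h (v + y)) = ∫ y in (0:ℝ)..η, ((h (v+y) + 1) - 1) := by simp
    rw [this, intervalIntegral.integral_sub]
    · rw [intervalIntegral.integral_const, sub_zero, smul_eq_mul, mul_one]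
      congr 1
      apply intervalIntegral.integral_congr
      intro y hy
      rw [Set.uIcc_of_le hη.le] at hy
      simp only
      rw [hh _ (by linarith [hy.1])]; ring
    · apply IntervalIntegrable.add _ (by simp)
      exact intInt (h := fun y => h (v + y)) (by fun_prop) (fun u => hhB _) _ _
    · simp
  have fint : ∀ v η, 0 ≤ v → 0 < η → IntervalIntegrable (fun y => f (v + y)) volume 0 η := by
    intro v η hv hη
    have : IntervalIntegrable (fun y => h (v + y) + 1) volume 0 η :=
      IntervalIntegrable.add (intInt (h := fun y => h (v + y)) (by fun_prop) (fun u => hhB _) _ _) (by simp)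
    refine this.congr (fun y hy => ?_)
    rw [Set.uIoc_of_le hη.le] at hy
    rw [hh _ (by linarith [hy.1])]; ring
  have fpos : ∀ᶠ v in atTop, 0 ≤ v ∧ 0 ≤ f v := by
    have := key 1 one_pos
    filter_upwards [this.eventually (lt_mem_nhds (show (-1:ℝ) < 0 by norm_num)), eventually_ge_atTop (0:ℝ),
      (tendsto_atTop_add_const_right atTop (-1:ℝ) tendsto_id).eventually
        (this.eventually (lt_mem_nhds (show (-1:ℝ) < 0 by norm_num))), eventually_ge_atTop (1:ℝ)] with v hv h0 hv1 h1
    refine ⟨h0, ?_⟩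
    simp only [id] at hv1
    rw [hIntg _ 1 (by linarith) one_pos] at hv1
    by_contra hneg
    push Not at hneg
    have : (∫ y in (0:ℝ)..1, f (v + -1 + y)) ≤ ∫ y in (0:ℝ)..1, (0:ℝ) := by
      apply intervalIntegral.integral_mono_on zero_le_one (fint _ _ (by linarith) one_pos) (by simp)
      intro y hy
      have := fm (v + -1 + y) v (by linarith [hy.2])
      by_contra hc
      push Not at hc
      have := mul_pos hc (Real.exp_pos (-(v - (v + -1 + y))))
      linarith
    rw [intervalIntegral.integral_zero] at this
    linarith
  have up : ∀ η, 0 < η → ∀ᶠ v in atTop, f v ≤ Real.exp η * (1 + η) := by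
    intro η hη
    filter_upwards [fpos, (key η hη).eventually (gt_mem_nhds (show (0:ℝ) < η * η by positivity))] with v hv h1
    rw [hIntg v η hv.1 hη] at h1
    have : ∫ y in (0:ℝ)..η, f v * Real.exp (-η) ≤ ∫ y in (0:ℝ)..η, f (v + y) := by
      apply intervalIntegral.integral_mono_on hη.le (by simp) (fint _ _ hv.1 hη)
      intro y hy
      refine le_trans ?_ (fm v (v + y) (by linarith [hy.1]))
      apply mul_le_mul_of_nonneg_left _ hv.2
      apply Real.exp_le_exp.2
      linarith [hy.2]
    rw [intervalIntegral.integral_const, sub_zero, smul_eq_mul] at this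
    have h2 : f v * Real.exp (-η) ≤ 1 + η := by
      have : η * (f v * Real.exp (-η)) ≤ η * (1 + η) := by linarith
      exact le_of_mul_le_mul_left this hη
    calc f v = Real.exp η * (f v * Real.exp (-η)) := by
          rw [mul_comm, mul_assoc, ← Real.exp_add]; simp
      _ ≤ _ := by gcongr
  have lo : ∀ η, 0 < η → ∀ᶠ v in atTop, Real.exp (-η) * (1 - η) ≤ f v := by
    intro η hη
    have k2 := (tendsto_atTop_add_const_right atTop (-η:ℝ) tendsto_id).eventually
      ((key η hη).eventually (lt_mem_nhds (show -(η * η) < 0 by simp; positivity)))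
    have k3 := (tendsto_atTop_add_const_right atTop (-η:ℝ) tendsto_id).eventually fpos
    filter_upwards [fpos, k2, k3] with v hv h1 h3
    simp only [id] at h1 h3
    rw [hIntg _ η h3.1 hη] at h1
    have : ∫ y in (0:ℝ)..η, f (v + -η + y) ≤ ∫ y in (0:ℝ)..η, f v * Real.exp η := by
      apply intervalIntegral.integral_mono_on hη.le (fint _ _ h3.1 hη) (by simp)
      intro y hy
      have := fm (v + -η + y) v (by linarith [hy.2])
      calc f (v + -η + y) = (f (v + -η + y) * Real.exp (-(v - (v + -η + y)))) * Real.exp (v - (v + -η + y)) := by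
            rw [mul_assoc, ← Real.exp_add]; simp
        _ ≤ f v * Real.exp (v - (v + -η + y)) := by gcongr
        _ ≤ _ := by
          apply mul_le_mul_of_nonneg_left _ hv.2
          apply Real.exp_le_exp.2
          linarith [hy.1]
    rw [intervalIntegral.integral_const, sub_zero, smul_eq_mul] at this
    have h2 : 1 - η ≤ f v * Real.exp η := by
      have : η * (1 - η) ≤ η * (f v * Real.exp η) := by linarith
      exact le_of_mul_le_mul_left this hη
    calc _ ≤ Real.exp (-η) * (f v * Real.exp η) := by gcongr
      _ = f v := by rw [mul_comm, mul_assoc, ← Real.exp_add]; simp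
  have ft : Tendsto f atTop (𝓝 1) := by
    rw [tendsto_order]
    constructor
    · intro a ha
      have : Tendsto (fun η : ℝ => Real.exp (-η) * (1 - η)) (𝓝[>] 0) (𝓝 1) := by
        have : Continuous fun η : ℝ => Real.exp (-η) * (1 - η) := by fun_prop
        have := (this.tendsto 0).mono_left (nhdsWithin_le_nhds (s := Set.Ioi 0))
        simpa using this
      obtain ⟨η, h1, h2⟩ := ((this.eventually (lt_mem_nhds ha)).and self_mem_nhdsWithin).exists
      filter_upwards [lo η h2] with v hv using h1.trans_le hv
    · intro a ha
      have : Tendsto (fun η : ℝ => Real.exp η * (1 + η)) (𝓝[>] 0) (𝓝 1) := by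
        have : Continuous fun η : ℝ => Real.exp η * (1 + η) := by fun_prop
        have := (this.tendsto 0).mono_left (nhdsWithin_le_nhds (s := Set.Ioi 0))
        simpa using this
      obtain ⟨η, h1, h2⟩ := ((this.eventually (gt_mem_nhds ha)).and self_mem_nhdsWithin).exists
      filter_upwards [up η h2] with v hv using hv.trans_lt h1
  refine (ft.comp Real.tendsto_log_atTop).congr' ?_
  filter_upwards [eventually_gt_atTop 0] with x hx
  simp only [Function.comp, hf, Real.exp_neg, Real.exp_log hx]
  rfl

end PIT
end

section
open Filter Topology MeasureTheory

namespace PIT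

theorem lattice_sum {E ι : Type*} [NormedAddCommGroup E] [NormedSpace ℝ E] [FiniteDimensional ℝ E]
    [MeasurableSpace E] [BorelSpace E] (μ : Measure E) [μ.IsAddHaarMeasure] [Fintype ι]
    (b : Module.Basis ι ℝ E) (F : E → ℝ) {C R : ℝ} (hF : ∀ x y, |F x - F y| ≤ C * ‖x - y‖)
    (hR : ∀ x, R < ‖x‖ → F x = 0) :
    ∃ c C' : ℝ, ∀ t : ℝ, 1 ≤ t →
      |(∑' a : Submodule.span ℤ (Set.range b), F (t⁻¹ • (a : E))) - c * t ^ Module.finrank ℝ E| ≤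
        C' * (t ^ Module.finrank ℝ E * t⁻¹) := by
  set d := Module.finrank ℝ E
  set D := ZSpan.fundamentalDomain b
  set δ := ∑ i, ‖b i‖
  have δ0 : 0 ≤ δ := Finset.sum_nonneg fun i _ => norm_nonneg _
  have Fc : Continuous F := by
    have : LipschitzWith (Real.toNNReal |C|) F := by
      apply LipschitzWith.of_dist_le_mul
      intro x y
      rw [Real.coe_toNNReal _ (abs_nonneg _), dist_eq_norm, dist_eq_norm]
      exact (hF x y).trans (by gcongr; exact le_abs_self C)
    exact this.continuous
  have D0 : μ.real D ≠ 0 := by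
    rw [Measure.real, ENNReal.toReal_ne_zero]
    exact ⟨ZSpan.measure_fundamentalDomain_ne_zero b,
      (ZSpan.fundamentalDomain_isBounded b).measure_lt_top.ne⟩
  have Dpos : 0 < μ.real D := lt_of_le_of_ne measureReal_nonneg (Ne.symm D0)
  set R' := |R| + δ
  refine ⟨(∫ x, F x ∂μ) / μ.real D, (|C| * δ * (R' ^ d * μ.real (Metric.ball 0 1))) / μ.real D, fun t ht => ?_⟩
  have t0 : 0 < t := by linarith
  set P : E → ℝ := fun x => F (t⁻¹ • (ZSpan.floor b x : E))
  have hdiff : ∀ x, |P x - F (t⁻¹ • x)| ≤ (Metric.closedBall (0:E) (R' * t)).indicator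
      (fun _ => |C| * δ * t⁻¹) x := by
    intro x
    have hn : ‖t⁻¹ • (ZSpan.floor b x : E) - t⁻¹ • x‖ ≤ t⁻¹ * δ := by
      rw [← smul_sub, norm_smul, norm_inv, Real.norm_of_nonneg t0.le, norm_sub_rev, ← ZSpan.fract_apply]
      gcongr
      exact ZSpan.norm_fract_le b x
    by_cases hx : x ∈ Metric.closedBall (0:E) (R' * t)
    · rw [Set.indicator_of_mem hx]
      calc _ ≤ C * ‖t⁻¹ • (ZSpan.floor b x : E) - t⁻¹ • x‖ := hF _ _
        _ ≤ |C| * (t⁻¹ * δ) := by gcongr; exact le_abs_self C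
        _ = _ := by ring
    · rw [Set.indicator_of_notMem hx]
      rw [mem_closedBall_zero_iff, not_le] at hx
      have h1 : R' < ‖t⁻¹ • x‖ := by
        rw [norm_smul, norm_inv, Real.norm_of_nonneg t0.le, inv_mul_eq_div, lt_div_iff₀ t0]
        exact hx
      have h2 : R < ‖t⁻¹ • x‖ := by
        have := le_abs_self R
        simp only [R'] at h1; linarith
      have h3 : R < ‖t⁻¹ • (ZSpan.floor b x : E)‖ := by
        have a1 := le_abs_self R
        have a2 := norm_sub_norm_le (t⁻¹ • x) (t⁻¹ • (ZSpan.floor b x : E))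
        rw [norm_sub_rev] at a2
        have a3 : t⁻¹ * δ ≤ δ := mul_le_of_le_one_left δ0 (inv_le_one_of_one_le₀ ht)
        simp only [R'] at h1; linarith
      simp [P, hR _ h2, hR _ h3]
  have hI : Integrable ((Metric.closedBall (0:E) (R' * t)).indicator (fun _ => |C| * δ * t⁻¹)) μ :=
    (integrable_indicator_iff measurableSet_closedBall).2
      (integrableOn_const measure_closedBall_lt_top.ne)
  have Pm : Measurable P := by
    have : P = (fun n : ι → ℤ => F (t⁻¹ • ∑ i, n i • b i)) ∘ (fun x i => ⌊b.repr x i⌋) := by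
      ext x
      simp only [P, Function.comp, ZSpan.floor, Submodule.coe_sum, Submodule.coe_smul, Module.Basis.restrictScalars_apply]
    rw [this]
    apply Measurable.comp (measurable_of_countable _)
    apply measurable_pi_lambda
    intro i
    apply Int.measurable_floor.comp
    have : Continuous fun x => b.coord i x := (LinearMap.continuous_of_finiteDimensional (b.coord i))
    exact this.measurable
  have Fi : Integrable F μ := by
    apply Fc.integrable_of_hasCompactSupport
    apply HasCompactSupport.of_support_subset_isCompact (isCompact_closedBall (0:E) R)
    intro x hx
    by_contra h
    rw [mem_closedBall_zero_iff, not_le] at h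
    exact hx (hR x h)
  have Fti : Integrable (fun x => F (t⁻¹ • x)) μ := Fi.comp_smul (inv_ne_zero t0.ne')
  have hdi : Integrable (fun x => P x - F (t⁻¹ • x)) μ := by
    refine hI.mono' (Pm.sub (by have := Fc.measurable; fun_prop)).aestronglyMeasurable
      (Eventually.of_forall fun x => hdiff x)
  have Pi : Integrable P μ := by
    have := hdi.add Fti
    refine this.congr (Eventually.of_forall fun x => by simp)
  have hsum : ∫ x, P x ∂μ = μ.real D * ∑' a : Submodule.span ℤ (Set.range b), F (t⁻¹ • (a : E)) := by
    have : VAddInvariantMeasure (Submodule.span ℤ (Set.range b)) E μ :=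
      inferInstanceAs (VAddInvariantMeasure (Submodule.span ℤ (Set.range b)).toAddSubgroup E μ)
    rw [(ZSpan.isAddFundamentalDomain b μ).integral_eq_tsum'' P Pi, ← tsum_mul_left]
    congr 1; ext a
    have : ∀ x ∈ D, P (a +ᵥ x) = F (t⁻¹ • (a : E)) := by
      intro x hx
      have h1 : ZSpan.fract b x = x := (ZSpan.fract_eq_self).2 hx
      have h2 := ZSpan.fract_zSpan_add b x a.2
      simp only [P]
      congr 2
      rw [h1, ZSpan.fract_apply] at h2
      have : (ZSpan.floor b ((a : E) + x) : E) = a := by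
        have := sub_eq_iff_eq_add.1 h2
        rw [add_comm (a : E) x] at this ⊢
        exact (add_left_cancel this).symm
      exact this
    rw [setIntegral_congr_fun (ZSpan.fundamentalDomain_measurableSet b) this]
    simp [D]
  have hIntg : ∫ x, F (t⁻¹ • x) ∂μ = t ^ d * ∫ x, F x ∂μ := by
    rw [Measure.integral_comp_inv_smul, abs_of_pos (by positivity), smul_eq_mul]
  have hb : |(∫ x, P x ∂μ) - ∫ x, F (t⁻¹ • x) ∂μ| ≤ |C| * δ * (R' ^ d * μ.real (Metric.ball 0 1)) * (t ^ d * t⁻¹) := by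
    rw [← integral_sub Pi Fti]
    rw [← Real.norm_eq_abs]
    calc _ ≤ ∫ x, (Metric.closedBall (0:E) (R' * t)).indicator (fun _ => |C| * δ * t⁻¹) x ∂μ :=
          norm_integral_le_of_norm_le hI (Eventually.of_forall hdiff)
      _ = _ := by
        rw [integral_indicator measurableSet_closedBall, setIntegral_const, smul_eq_mul, Measure.real,
          Measure.addHaar_closedBall _ _ (by positivity), ENNReal.toReal_mul, ENNReal.toReal_ofReal (by positivity)]
        change _ = |C| * δ * (R' ^ d * (μ (Metric.ball 0 1)).toReal) * _
        simp only [d]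
        ring_nf
  rw [hsum, hIntg] at hb
  have : ∀ S I X : ℝ, |μ.real D * S - t ^ d * I| ≤ X * (t ^ d * t⁻¹) →
      |S - I / μ.real D * t ^ d| ≤ X / μ.real D * (t ^ d * t⁻¹) := by
    intro S I X h
    have e : S - I / μ.real D * t ^ d = (μ.real D * S - t ^ d * I) / μ.real D := by field_simp
    rw [e, abs_div, abs_of_pos Dpos, div_mul_eq_mul_div]
    gcongr
  exact this _ _ _ hb

end PIT

end


section
open Filter Topology MeasureTheory

namespace PIT

theorem prod_lip {W : Type*} (s : Finset W) (f : W → ℝ → ℝ) (S : ℝ)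
    (hf : ∀ w, ∃ C, 0 ≤ C ∧ (∀ x ∈ Set.Icc 0 S, |f w x| ≤ C) ∧
      ∀ x ∈ Set.Icc 0 S, ∀ y ∈ Set.Icc 0 S, |f w x - f w y| ≤ C * |x - y|) :
    ∃ C, 0 ≤ C ∧ (∀ ξ : W → ℝ, (∀ w, ξ w ∈ Set.Icc 0 S) → |∏ w ∈ s, f w (ξ w)| ≤ C) ∧
      ∀ ξ η : W → ℝ, (∀ w, ξ w ∈ Set.Icc 0 S) → (∀ w, η w ∈ Set.Icc 0 S) → ∀ δ : ℝ,
      (∀ w, |ξ w - η w| ≤ δ) → 0 ≤ δ → |∏ w ∈ s, f w (ξ w) - ∏ w ∈ s, f w (η w)| ≤ C * δ := by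
  classical
  induction s using Finset.induction_on with
  | empty => exact ⟨1, by norm_num, by simp, by intros; simp; assumption⟩
  | insert a s ha ih =>
    obtain ⟨C, C0, h1, h2⟩ := ih
    obtain ⟨A, A0, g1, g2⟩ := hf a
    refine ⟨A * C + A * C, by positivity, ?_, ?_⟩
    · intro ξ hξ
      rw [Finset.prod_insert ha, abs_mul]
      have := mul_le_mul (g1 _ (hξ a)) (h1 ξ hξ) (abs_nonneg _) A0
      have : 0 ≤ A * C := by positivity
      linarith
    · intro ξ η hξ hη δ hδ δ0
      rw [Finset.prod_insert ha, Finset.prod_insert ha]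
      have e : f a (ξ a) * ∏ w ∈ s, f w (ξ w) - f a (η a) * ∏ w ∈ s, f w (η w) =
        f a (ξ a) * (∏ w ∈ s, f w (ξ w) - ∏ w ∈ s, f w (η w)) +
        (f a (ξ a) - f a (η a)) * ∏ w ∈ s, f w (η w) := by ring
      rw [e]
      refine (abs_add_le _ _).trans ?_
      rw [abs_mul, abs_mul]
      have t1 := mul_le_mul (g1 _ (hξ a)) (h2 ξ η hξ hη δ hδ δ0) (abs_nonneg _) A0
      have t2 := mul_le_mul ((g2 _ (hξ a) _ (hη a)).trans (mul_le_mul_of_nonneg_left (hδ a) A0))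
        (h1 η hη) (abs_nonneg _) (by positivity)
      nlinarith

theorem norm_lip {W : Type*} [Fintype W] (m : W → ℕ) (S : ℝ) (hS : 0 ≤ S) :
    ∃ C, 0 ≤ C ∧
      ∀ ξ η : W → ℝ, (∀ w, ξ w ∈ Set.Icc 0 S) → (∀ w, η w ∈ Set.Icc 0 S) → ∀ δ : ℝ,
      (∀ w, |ξ w - η w| ≤ δ) → 0 ≤ δ → |∏ w, ξ w ^ m w - ∏ w, η w ^ m w| ≤ C * δ := by
  suffices hh : _ by
    obtain ⟨C, C0, -, h⟩ := prod_lip (W := W) Finset.univ (fun w x => x ^ m w) S hh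
    exact ⟨C, C0, h⟩
  intro w
  refine ⟨S ^ m w + m w * S ^ (m w - 1), by positivity, ?_, ?_⟩
  · intro x hx
    rw [abs_of_nonneg (by have := hx.1; positivity)]
    have := pow_le_pow_left₀ hx.1 hx.2 (m w)
    have : 0 ≤ m w * S ^ (m w - 1) := by positivity
    linarith
  · intro x hx y hy
    have h := abs_pow_sub_pow_le x y (m w)
    refine h.trans ?_
    have : max |x| |y| ≤ S := by
      rw [abs_of_nonneg hx.1, abs_of_nonneg hy.1]; exact max_le hx.2 hy.2
    have := pow_le_pow_left₀ (le_max_of_le_left (abs_nonneg _)) this (m w - 1)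
    have h2 : 0 ≤ S ^ m w := by positivity
    have h3 := abs_nonneg (x-y)
    calc |x - y| * m w * max |x| |y| ^ (m w - 1) ≤ |x - y| * m w * S ^ (m w - 1) := by gcongr
      _ ≤ _ := by nlinarith

/-- The weight function. -/
noncomputable def gg (y : ℝ) : ℝ := y * max 0 (1 - y)

theorem gg_nonneg {y : ℝ} (h : 0 ≤ y) : 0 ≤ gg y := by unfold gg; positivity
theorem gg_le {y : ℝ} (h : 0 ≤ y) : gg y ≤ y := by
  unfold gg
  rcases max_cases 0 (1 - y) with ⟨h1, h2⟩ | ⟨h1, h2⟩ <;> rw [h1] <;> nlinarith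
theorem gg_zero {y : ℝ} (h : 1 ≤ y) : gg y = 0 := by
  unfold gg; rw [max_eq_left (by linarith)]; simp
theorem gg_lip {x y : ℝ} (hx : 0 ≤ x) (hy : 0 ≤ y) : |gg x - gg y| ≤ |x - y| := by
  unfold gg
  rcases max_cases 0 (1 - x) with ⟨h1, h2⟩ | ⟨h1, h2⟩ <;>
  rcases max_cases 0 (1 - y) with ⟨h3, h4⟩ | ⟨h3, h4⟩ <;> rw [h1, h3] <;>
  rw [abs_le] <;> rcases abs_cases (x - y) with ⟨h5, h6⟩ | ⟨h5, h6⟩ <;> rw [h5] <;>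
  constructor <;> nlinarith

theorem Phi_lip {W : Type*} [Fintype W] [Nonempty W] (m : W → ℕ) (hm : ∀ w, 0 < m w)
    (P : (W → ℝ) → ℝ) {c A : ℝ} (hc : 0 < c) (hA : 0 ≤ A) (hP : ∀ ξ, 0 ≤ P ξ) (hP1 : ∀ ξ, P ξ ≤ 1)
    (hsupp : ∀ ξ : W → ℝ, (∀ w, 0 < ξ w) → P ξ ≠ 0 → ∀ w w', c * ξ w' ≤ ξ w)
    (hlog : ∀ ξ η : W → ℝ, (∀ w, 0 < ξ w) → (∀ w, 0 < η w) → ∀ r : ℝ,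
      (∀ w, |Real.log (ξ w) - Real.log (η w)| ≤ r) → |P ξ - P η| ≤ A * r) :
    ∃ C R : ℝ, (∀ ξ η : W → ℝ, (∀ w, 0 ≤ ξ w) → (∀ w, 0 ≤ η w) → ∀ δ : ℝ,
      (∀ w, |ξ w - η w| ≤ δ) → |P ξ * gg (∏ w, ξ w ^ m w) - P η * gg (∏ w, η w ^ m w)| ≤ C * δ) ∧
      ∀ ξ : W → ℝ, (∀ w, 0 ≤ ξ w) → ∀ w, R < ξ w → P ξ * gg (∏ w, ξ w ^ m w) = 0 := by
  set N : (W → ℝ) → ℝ := fun ξ => ∏ w, ξ w ^ m w with hN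
  have N0 : ∀ ξ : W → ℝ, (∀ w, 0 ≤ ξ w) → 0 ≤ N ξ := fun ξ h =>
    Finset.prod_nonneg fun w _ => pow_nonneg (h w) _
  -- support info
  have supp : ∀ ξ : W → ℝ, (∀ w, 0 ≤ ξ w) → P ξ * gg (N ξ) ≠ 0 →
      (∀ w, 0 < ξ w) ∧ (∀ w w', c * ξ w' ≤ ξ w) ∧ ∀ w, ξ w ≤ 1 / c := by
    intro ξ h0 hne
    have pos : ∀ w, 0 < ξ w := by
      intro w
      refine lt_of_le_of_ne (h0 w) fun h => hne ?_
      have : N ξ = 0 := Finset.prod_eq_zero (Finset.mem_univ w) (by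
        rw [← h]; exact zero_pow (hm w).ne')
      rw [this]; simp [gg]
    have hs := hsupp ξ pos (left_ne_zero_of_mul hne)
    refine ⟨pos, hs, fun w => ?_⟩
    by_contra! hw
    apply hne
    rw [gg_zero, mul_zero]
    apply Finset.one_le_prod
    intro w' _
    apply one_le_pow₀
    have := hs w' w
    rw [div_lt_iff₀ hc] at hw
    linarith
  obtain ⟨B, B0, hB⟩ := norm_lip m (2 / c) (by positivity)
  -- bound by sup
  have bd : ∀ ξ : W → ℝ, (∀ w, 0 ≤ ξ w) → ∀ T, (∀ w, ξ w ≤ T) → 0 ≤ T →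
      |P ξ * gg (N ξ)| ≤ B * T := by
    intro ξ h0 T hT T0
    by_cases hne : P ξ * gg (N ξ) = 0
    · rw [hne, abs_zero]; positivity
    obtain ⟨h1, h2, h3⟩ := supp ξ h0 hne
    have := hB ξ 0 (fun w => ⟨h0 w, (h3 w).trans (by gcongr; norm_num)⟩)
      (fun w => ⟨le_rfl, by simp; positivity⟩) T (fun w => by
        simpa [abs_of_nonneg (h0 w)] using hT w) T0
    have z : ∏ w, (0 : W → ℝ) w ^ m w = 0 := by
      obtain ⟨w⟩ := ‹Nonempty W›
      exact Finset.prod_eq_zero (Finset.mem_univ w) (by simp [(hm w).ne'])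
    rw [z, sub_zero] at this
    have h4 := gg_le (N0 ξ h0)
    have h5 := gg_nonneg (N0 ξ h0)
    rw [abs_of_nonneg (mul_nonneg (hP ξ) h5)]
    have h6 := hP1 ξ
    calc P ξ * gg (N ξ) ≤ 1 * N ξ := by gcongr
      _ ≤ |N ξ| := by rw [one_mul]; exact le_abs_self _
      _ ≤ _ := this
  set C := B * (2 / c) + B * (2 / c + 1) + (A * (2 / c) * B + B) with hC
  have C0 : 0 ≤ C := by positivity
  have key : ∀ ξ η : W → ℝ, (∀ w, 0 ≤ ξ w) → (∀ w, 0 ≤ η w) → ∀ δ : ℝ,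
      (∀ w, |ξ w - η w| ≤ δ) → P ξ * gg (N ξ) ≠ 0 →
      |P ξ * gg (N ξ) - P η * gg (N η)| ≤ C * δ := by
    intro ξ η h0 k0 δ hδ hne
    have δ0 : 0 ≤ δ := by
      obtain ⟨w⟩ := ‹Nonempty W›
      exact (abs_nonneg _).trans (hδ w)
    obtain ⟨h1, h2, h3⟩ := supp ξ h0 hne
    obtain ⟨w1, hw1⟩ := Finite.exists_max ξ
    set T := ξ w1
    have T0 : 0 < T := h1 w1
    by_cases hcase : c * T / 2 ≤ δ
    · have b1 := bd ξ h0 T hw1 T0.le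
      have b2 := bd η k0 (T + δ) (fun w => by
        have := hδ w; rw [abs_le] at this; linarith [hw1 w]) (by positivity)
      have TT : T ≤ 2 / c * δ := by
        rw [div_mul_eq_mul_div, le_div_iff₀ hc]; linarith
      calc |P ξ * gg (N ξ) - P η * gg (N η)| ≤ |P ξ * gg (N ξ)| + |P η * gg (N η)| := abs_sub _ _
        _ ≤ B * (2 / c * δ) + B * (2 / c * δ + δ) := by
          refine add_le_add (b1.trans (by gcongr)) (b2.trans (by gcongr))
        _ ≤ C * δ := by
          rw [hC]
          have : 0 ≤ (A * (2 / c) * B + B) * δ := by positivity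
          nlinarith
    · push Not at hcase
      have low : ∀ w, c * T / 2 ≤ η w := by
        intro w
        have := hδ w; rw [abs_le] at this; have := h2 w w1; linarith
      have kpos : ∀ w, 0 < η w := fun w => lt_of_lt_of_le (by positivity) (low w)
      have clec : c ≤ 1 := by
        have := h2 w1 w1; nlinarith
      have T1 : T ≤ 1 / c := h3 w1
      have up : ∀ w, η w ≤ 2 / c := by
        intro w
        have := hδ w; rw [abs_le] at this; have := hw1 w
        have e : 2 / c = 1 / c + 1 / c := by ring
        rw [e]
        nlinarith
      have upx : ∀ w, ξ w ≤ 2 / c := fun w => (h3 w).trans (by gcongr; norm_num)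
      have logb : ∀ w, |Real.log (ξ w) - Real.log (η w)| ≤ δ / (c * T / 2) := by
        intro w
        have lx : c * T / 2 ≤ ξ w := by have := h2 w w1; nlinarith
        have gen : ∀ a b : ℝ, c * T / 2 ≤ a → c * T / 2 ≤ b → |a - b| ≤ δ →
            Real.log a - Real.log b ≤ δ / (c * T / 2) := by
          intro a b ha hb hab
          have a0 : 0 < a := lt_of_lt_of_le (by positivity) ha
          have b0 : 0 < b := lt_of_lt_of_le (by positivity) hb
          rw [← Real.log_div a0.ne' b0.ne']
          refine (Real.log_le_sub_one_of_pos (by positivity)).trans ?_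
          rw [div_sub_one b0.ne']
          exact div_le_div₀ δ0 ((le_abs_self _).trans hab) (by positivity) hb
        rw [abs_le]
        constructor
        · have := gen (η w) (ξ w) (low w) lx (by rw [abs_sub_comm]; exact hδ w)
          linarith
        · exact gen _ _ lx (low w) (hδ w)
      have e1 := hlog ξ η h1 kpos _ logb
      have e2 := hB ξ η (fun w => ⟨h0 w, upx w⟩) (fun w => ⟨k0 w, up w⟩) δ hδ δ0
      have e3 := gg_lip (N0 ξ h0) (N0 η k0)
      have z : ∏ w, (0 : W → ℝ) w ^ m w = 0 := by
        obtain ⟨w⟩ := ‹Nonempty W›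
        exact Finset.prod_eq_zero (Finset.mem_univ w) (by simp [(hm w).ne'])
      have e4 := hB ξ 0 (fun w => ⟨h0 w, upx w⟩)
        (fun w => ⟨le_rfl, by simp; positivity⟩) T (fun w => by
          simpa [abs_of_nonneg (h0 w)] using hw1 w) T0.le
      rw [z, sub_zero] at e4
      have e5 := gg_le (N0 ξ h0)
      have e6 := gg_nonneg (N0 ξ h0)
      have e7 : gg (N ξ) ≤ B * T := e5.trans ((le_abs_self _).trans e4)
      have id : P ξ * gg (N ξ) - P η * gg (N η) =
        (P ξ - P η) * gg (N ξ) + P η * (gg (N ξ) - gg (N η)) := by ring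
      rw [id]
      refine (abs_add_le _ _).trans ?_
      rw [abs_mul, abs_mul, abs_of_nonneg e6, abs_of_nonneg (hP η)]
      calc |P ξ - P η| * gg (N ξ) + P η * |gg (N ξ) - gg (N η)|
          ≤ A * (δ / (c * T / 2)) * (B * T) + 1 * (B * δ) := by
            refine add_le_add (mul_le_mul e1 e7 e6 (by positivity))
              (mul_le_mul (hP1 η) (e3.trans e2) (abs_nonneg _) (by norm_num))
        _ = (A * (2 / c) * B + B) * δ := by field_simp
        _ ≤ C * δ := by
          gcongr
          rw [hC]
          have : 0 ≤ B * (2 / c) + B * (2 / c + 1) := by positivity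
          linarith
  refine ⟨C, 1 / c, ?_, ?_⟩
  · intro ξ η h0 k0 δ hδ
    have δ0 : 0 ≤ δ := by
      obtain ⟨w⟩ := ‹Nonempty W›
      exact (abs_nonneg _).trans (hδ w)
    by_cases hne : P ξ * gg (N ξ) = 0
    · by_cases hne' : P η * gg (N η) = 0
      · change |P ξ * gg (N ξ) - P η * gg (N η)| ≤ C * δ
        rw [hne, hne']; simp; positivity
      · rw [abs_sub_comm]
        exact key η ξ k0 h0 δ (fun w => by rw [abs_sub_comm]; exact hδ w) hne'
    · exact key ξ η h0 k0 δ hδ hne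
  · intro ξ h0 w hw
    by_contra hne
    exact absurd ((supp ξ h0 hne).2.2 w) (not_le.mpr hw)

end PIT

end


section
open Filter Topology MeasureTheory

namespace PIT

/-- tent function -/
noncomputable def tau (v : ℝ) : ℝ := max 0 (1 - |v|)

theorem tau_nonneg (v : ℝ) : 0 ≤ tau v := le_max_left _ _
theorem tau_le_one (v : ℝ) : tau v ≤ 1 := max_le (by norm_num) (by linarith [abs_nonneg v])
theorem tau_lip (u v : ℝ) : |tau u - tau v| ≤ |u - v| := by
  unfold tau
  rw [max_comm 0, max_comm 0]
  refine (abs_max_sub_max_le_abs _ _ _).trans ?_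
  rw [abs_sub_comm u v]
  have := abs_abs_sub_abs_le v u
  have e : (1 - |u|) - (1 - |v|) = |v| - |u| := by ring
  rw [e]; exact this
theorem tau_ne_zero {v : ℝ} (h : tau v ≠ 0) : |v| ≤ 1 := by
  by_contra! h'
  exact h (max_eq_left (by linarith))

theorem prod_tau_lip {ι : Type*} (s : Finset ι) (a b : ι → ℝ) :
    |∏ i ∈ s, tau (a i) - ∏ i ∈ s, tau (b i)| ≤ ∑ i ∈ s, |a i - b i| := by
  classical
  induction s using Finset.induction_on with
  | empty => simp
  | insert i s hi ih =>
    rw [Finset.prod_insert hi, Finset.prod_insert hi, Finset.sum_insert hi]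
    have e : tau (a i) * ∏ i ∈ s, tau (a i) - tau (b i) * ∏ i ∈ s, tau (b i) =
      (tau (a i) - tau (b i)) * ∏ i ∈ s, tau (a i) +
        tau (b i) * (∏ i ∈ s, tau (a i) - ∏ i ∈ s, tau (b i)) := by ring
    rw [e]
    refine (abs_add_le _ _).trans (add_le_add ?_ ?_)
    · rw [abs_mul]
      have h1 : |∏ i ∈ s, tau (a i)| ≤ 1 := by
        rw [abs_of_nonneg (Finset.prod_nonneg fun i _ => tau_nonneg _)]
        exact Finset.prod_le_one (fun i _ => tau_nonneg _) (fun i _ => tau_le_one _)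
      have := mul_le_mul (tau_lip (a i) (b i)) h1 (abs_nonneg _) (abs_nonneg _)
      linarith
    · rw [abs_mul, abs_of_nonneg (tau_nonneg _)]
      have := mul_le_mul (tau_le_one (b i)) ih (abs_nonneg _) (by norm_num)
      linarith

theorem log_prod' {W : Type*} [Fintype W] (m : W → ℕ) (ξ : W → ℝ) (h : ∀ w, 0 < ξ w) :
    Real.log (∏ w, ξ w ^ m w) = ∑ w, m w * Real.log (ξ w) := by
  rw [Real.log_prod (fun w _ => (pow_pos (h w) _).ne')]
  simp [Real.log_pow]

theorem F_lip {W ι : Type*} [Fintype W] [Fintype ι] (w0 : W) (m : W → ℕ) (hm : ∀ w, 0 < m w)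
    (d : ℕ) (hd : ∑ w, m w = d)
    (B : Module.Basis ι ℝ ({w : W // w ≠ w0} → ℝ)) (P : (W → ℝ) → ℝ)
    (hP : ∀ ξ, P ξ = ∏ i, tau (B.repr (fun w => (m w.1 : ℝ) *
      (Real.log (ξ w.1) - Real.log (∏ w, ξ w ^ m w) * (d : ℝ)⁻¹)) i)) :
    ∃ C R : ℝ, (∀ ξ η : W → ℝ, (∀ w, 0 ≤ ξ w) → (∀ w, 0 ≤ η w) → ∀ δ : ℝ,
      (∀ w, |ξ w - η w| ≤ δ) → |P ξ * gg (∏ w, ξ w ^ m w) - P η * gg (∏ w, η w ^ m w)| ≤ C * δ) ∧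
      ∀ ξ : W → ℝ, (∀ w, 0 ≤ ξ w) → ∀ w, R < ξ w → P ξ * gg (∏ w, ξ w ^ m w) = 0 := by
  classical
  have : Nonempty W := ⟨w0⟩
  have d0 : 0 < d := by
    rw [← hd]; exact Finset.sum_pos (fun w _ => hm w) Finset.univ_nonempty
  have d0' : (0:ℝ) < d := by exact_mod_cast d0
  have hd' : ∑ w, (m w : ℝ) = d := by exact_mod_cast hd
  have mle : ∀ w, (m w : ℝ) ≤ d := by
    intro w; rw [← hd']; exact Finset.single_le_sum (f := fun w => (m w : ℝ)) (fun _ _ => by positivity) (Finset.mem_univ w)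
  have m1 : ∀ w, (1:ℝ) ≤ m w := fun w => by exact_mod_cast hm w
  -- bound coordinates
  have co : ∀ i, ∃ a : ℝ, 0 ≤ a ∧ ∀ v, |B.repr v i| ≤ a * ‖v‖ := by
    intro i
    refine ⟨‖LinearMap.toContinuousLinearMap (B.coord i)‖, norm_nonneg _, fun v => ?_⟩
    exact (LinearMap.toContinuousLinearMap (B.coord i)).le_opNorm v
  choose a a0 ha using co
  set A2 := ∑ i, ‖B i‖
  have A20 : 0 ≤ A2 := Finset.sum_nonneg fun i _ => norm_nonneg _
  have A2b : ∀ v, (∀ i, |B.repr v i| ≤ 1) → ‖v‖ ≤ A2 := by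
    intro v hv
    conv_lhs => rw [← B.sum_repr v]
    refine (norm_sum_le _ _).trans (Finset.sum_le_sum fun i _ => ?_)
    rw [norm_smul, Real.norm_eq_abs]
    exact mul_le_of_le_one_left (norm_nonneg _) (hv i)
  set A3 := A2 * (Fintype.card W + 1)
  have A23 : A2 ≤ A3 := by
    have : (0:ℝ) ≤ Fintype.card W := by positivity
    show A2 ≤ A2 * (Fintype.card W + 1)
    nlinarith
  refine Phi_lip m hm P (c := Real.exp (- (2 * A3))) (A := ∑ i, a i * (d * 2)) (Real.exp_pos _)
    (Finset.sum_nonneg fun i _ => by have := a0 i; positivity) ?_ ?_ ?_ ?_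
  · intro ξ; rw [hP]; exact Finset.prod_nonneg fun i _ => tau_nonneg _
  · intro ξ; rw [hP]; exact Finset.prod_le_one (fun i _ => tau_nonneg _) (fun i _ => tau_le_one _)
  · intro ξ pos hne
    rw [hP, Finset.prod_ne_zero_iff] at hne
    have h1 := A2b _ (fun i => tau_ne_zero (hne i (Finset.mem_univ _)))
    set N := ∏ w, ξ w ^ m w with hN
    set u : W → ℝ := fun w => Real.log (ξ w) - Real.log N * (d : ℝ)⁻¹ with hu
    have h2 : ∀ w, w ≠ w0 → |m w * u w| ≤ A2 := fun w hw =>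
      (norm_le_pi_norm (fun w : {w : W // w ≠ w0} => (m w.1 : ℝ) *
        (Real.log (ξ w.1) - Real.log N * (d : ℝ)⁻¹)) ⟨w, hw⟩).trans h1
    have h3 : ∑ w, m w * u w = 0 := by
      simp only [hu, mul_sub, Finset.sum_sub_distrib]
      rw [← Finset.sum_mul, hd', hN, log_prod' m ξ pos]
      field_simp
      ring
    have h4 : |m w0 * u w0| ≤ A3 := by
      rw [← Finset.add_sum_erase _ _ (Finset.mem_univ w0)] at h3
      have : m w0 * u w0 = - ∑ w ∈ Finset.univ.erase w0, m w * u w := by linarith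
      rw [this, abs_neg]
      refine (Finset.abs_sum_le_sum_abs _ _).trans ?_
      refine (Finset.sum_le_card_nsmul _ _ A2 fun w hw => h2 w (Finset.ne_of_mem_erase hw)).trans ?_
      rw [nsmul_eq_mul, mul_comm]
      show A2 * _ ≤ A2 * (Fintype.card W + 1)
      gcongr
      have : (Finset.univ.erase w0).card ≤ Fintype.card W := Finset.card_le_univ _
      have : ((Finset.univ.erase w0).card : ℝ) ≤ Fintype.card W := by exact_mod_cast this
      linarith
    have h5 : ∀ w, |u w| ≤ A3 := by
      intro w
      have : |m w * u w| ≤ A3 := by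
        by_cases hw : w = w0
        · rw [hw]; exact h4
        · exact (h2 w hw).trans A23
      rw [abs_mul, Nat.abs_cast] at this
      have := m1 w
      nlinarith [abs_nonneg (u w)]
    intro w w'
    have e1 := h5 w
    have e2 := h5 w'
    rw [abs_le] at e1 e2
    rw [← Real.exp_log (pos w), ← Real.exp_log (pos w'), ← Real.exp_add]
    apply Real.exp_le_exp.mpr
    simp only [hu] at e1 e2
    linarith
  · intro ξ η px pe r hr
    have r0 : 0 ≤ r := (abs_nonneg _).trans (hr w0)
    rw [hP, hP]
    refine (prod_tau_lip _ _ _).trans ?_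
    rw [Finset.sum_mul]
    refine Finset.sum_le_sum fun i _ => ?_
    rw [← Finsupp.sub_apply, ← map_sub]
    refine (ha i _).trans ?_
    rw [mul_assoc]
    refine mul_le_mul_of_nonneg_left ?_ (a0 i)
    rw [pi_norm_le_iff_of_nonneg (by positivity)]
    intro w
    rw [Pi.sub_apply, ← mul_sub, norm_mul, Real.norm_natCast, mul_assoc]
    refine mul_le_mul (mle w) ?_ (norm_nonneg _) d0'.le
    rw [log_prod' m ξ px, log_prod' m η pe]
    have h6 : |∑ w, m w * Real.log (ξ w) - ∑ w, m w * Real.log (η w)| ≤ d * r := by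
      rw [← Finset.sum_sub_distrib, ← hd', Finset.sum_mul]
      refine (Finset.abs_sum_le_sum_abs _ _).trans (Finset.sum_le_sum fun w _ => ?_)
      rw [← mul_sub, abs_mul, Nat.abs_cast]
      exact mul_le_mul_of_nonneg_left (hr w) (by positivity)
    have h7 : |(∑ w, m w * Real.log (ξ w)) * (d:ℝ)⁻¹ - (∑ w, m w * Real.log (η w)) * (d:ℝ)⁻¹| ≤ r := by
      rw [← sub_mul, abs_mul, abs_inv, Nat.abs_cast, ← div_eq_mul_inv, div_le_iff₀ d0']
      linarith
    have h8 := hr w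
    rw [Real.norm_eq_abs]
    rw [abs_le] at h7 h8 ⊢
    constructor <;> linarith

end PIT

namespace PIT
open NumberField NumberField.InfinitePlace NumberField.Units NumberField.Units.dirichletUnitTheorem
  NumberField.mixedEmbedding

variable (K : Type*) [Field K] [NumberField K]

open scoped Classical in
noncomputable def phi (x : mixedSpace K) : ℝ :=
  ∏ i, tau (((basisUnitLattice K).ofZLatticeBasis ℝ (unitLattice K)).repr (logMap x) i)

open scoped Classical in
noncomputable def FF (x : mixedSpace K) : ℝ := phi K x * gg (mixedEmbedding.norm x)

open scoped Classical in
theorem FF_lip : ∃ C R : ℝ, (∀ x y : mixedSpace K, |FF K x - FF K y| ≤ C * ‖x - y‖) ∧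
    ∀ x : mixedSpace K, R < ‖x‖ → FF K x = 0 := by
  obtain ⟨C, R, h1, h2⟩ := F_lip (W := InfinitePlace K) w₀ mult (fun w => mult_pos)
    (Module.finrank ℚ K) sum_mult_eq ((basisUnitLattice K).ofZLatticeBasis ℝ (unitLattice K))
    (fun ξ => ∏ i, tau (((basisUnitLattice K).ofZLatticeBasis ℝ (unitLattice K)).repr
      (fun w => (mult w.1 : ℝ) *
      (Real.log (ξ w.1) - Real.log (∏ w, ξ w ^ mult w) * (Module.finrank ℚ K : ℝ)⁻¹)) i))
    (fun ξ => rfl)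
  refine ⟨C, R, fun x y => ?_, fun x hx => ?_⟩
  · refine h1 (fun w => normAtPlace w x) (fun w => normAtPlace w y)
      (fun w => normAtPlace_nonneg _ _) (fun w => normAtPlace_nonneg _ _) ‖x - y‖ (fun w => ?_)
    have key : ∀ z : mixedSpace K, normAtPlace w z ≤ ‖z‖ := fun z => by
      rw [norm_eq_sup'_normAtPlace]
      exact Finset.le_sup' (fun w => normAtPlace w z) (Finset.mem_univ w)
    rw [abs_le]
    have a1 := normAtPlace_add_le w (x - y) y
    have a2 := normAtPlace_add_le w (y - x) x
    rw [sub_add_cancel] at a1 a2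
    have a3 := key (x - y)
    have a4 := key (y - x)
    rw [norm_sub_rev] at a4
    constructor <;> linarith
  · rw [norm_eq_sup'_normAtPlace, Finset.lt_sup'_iff] at hx
    obtain ⟨w, -, hw⟩ := hx
    exact h2 (fun w => normAtPlace w x) (fun w => normAtPlace_nonneg _ _) w hw

end PIT

end


section
namespace PIT
open NumberField NumberField.InfinitePlace NumberField.Units NumberField.Units.dirichletUnitTheorem
  NumberField.mixedEmbedding

theorem tau_sum (v : ℝ) : ∑ e ∈ ({-⌊v⌋, -⌊v⌋ - 1} : Finset ℤ), tau (v + e) = 1 := by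
  rw [Finset.sum_pair (by omega)]
  have h1 := Int.floor_le v
  have h2 := Int.lt_floor_add_one v
  unfold tau
  push_cast
  rw [abs_of_nonneg (by linarith), abs_of_nonpos (by linarith), max_eq_right (by linarith),
    max_eq_right (by linarith)]
  ring

theorem tau_supp (v : ℝ) (e : ℤ) (he : e ∉ ({-⌊v⌋, -⌊v⌋ - 1} : Finset ℤ)) : tau (v + e) = 0 := by
  have h1 := Int.floor_le v
  have h2 := Int.lt_floor_add_one v
  simp only [Finset.mem_insert, Finset.mem_singleton, not_or] at he
  unfold tau
  apply max_eq_left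
  have : e ≤ -⌊v⌋ - 2 ∨ -⌊v⌋ + 1 ≤ e := by omega
  rcases this with h | h
  · have : (e:ℝ) ≤ -⌊v⌋ - 2 := by exact_mod_cast h
    rw [abs_of_nonpos (by linarith)]; linarith
  · have : -(⌊v⌋:ℝ) + 1 ≤ e := by exact_mod_cast h
    rw [abs_of_nonneg (by linarith)]; linarith

theorem hasSum_tau {T ι : Type*} [Fintype T] [Fintype ι] [DecidableEq ι] (v : ι → ℝ) :
    HasSum (fun p : T × (ι → ℤ) => ∏ i, tau (v i + p.2 i)) (Fintype.card T) := by
  have : HasSum _ _ _ := hasSum_sum_of_ne_finset_zero (L := SummationFilter.unconditional _) (f := fun p : T × (ι → ℤ) => ∏ i, tau (v i + p.2 i))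
    (s := Finset.univ ×ˢ Fintype.piFinset (fun i => ({-⌊v i⌋, -⌊v i⌋ - 1} : Finset ℤ))) (by
      intro p hp
      simp only [Finset.mem_product, Finset.mem_univ, true_and, Fintype.mem_piFinset, not_forall] at hp
      obtain ⟨i, hi⟩ := hp
      exact Finset.prod_eq_zero (Finset.mem_univ i) (tau_supp _ _ hi))
  convert this using 1
  rw [Finset.sum_product]
  simp only
  rw [← Finset.prod_univ_sum (fun i => ({-⌊v i⌋, -⌊v i⌋ - 1} : Finset ℤ))
    (fun i e => tau (v i + e))]
  simp_rw [tau_sum]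
  simp

variable (K : Type*) [Field K] [NumberField K]

open scoped Classical in
theorem hasSum_units (x : mixedSpace K) (hx : mixedEmbedding.norm x ≠ 0) :
    HasSum (fun u : (𝓞 K)ˣ => phi K (u • x)) (torsionOrder K) := by
  set B := (basisUnitLattice K).ofZLatticeBasis ℝ (unitLattice K) with hB
  let e : torsion K × (Fin (rank K) → ℤ) ≃ (𝓞 K)ˣ := Equiv.ofBijective
    (fun p => p.1 * ∏ i, (fundSystem K i) ^ (p.2 i)) (by
      rw [Function.bijective_iff_existsUnique]
      intro u
      obtain ⟨p, hp, hu⟩ := exist_unique_eq_mul_prod K u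
      exact ⟨p, hp.symm, fun q hq => hu q hq.symm⟩)
  have : Fintype (torsion K) := Fintype.ofFinite _
  have h := hasSum_tau (T := torsion K) (fun i => B.repr (logMap x) i)
  rw [← Equiv.hasSum_iff e, torsionOrder, Nat.card_eq_fintype_card]
  convert h using 1
  funext p
  simp only [Function.comp]
  unfold phi
  refine Finset.prod_congr rfl fun i _ => ?_
  congr 1
  rw [logMap_unit_smul _ hx, map_add, Finsupp.add_apply, add_comm]
  congr 1
  have : logEmbedding K (Additive.ofMul (e p)) = ∑ i, (p.2 i : ℝ) • B i := by
    show logEmbedding K (Additive.ofMul (p.1 * ∏ i, (fundSystem K i) ^ (p.2 i))) = _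
    rw [ofMul_mul, map_add, (logEmbedding_eq_zero_iff).mpr p.1.2, zero_add, ofMul_prod, map_sum]
    refine Finset.sum_congr rfl fun i _ => ?_
    rw [ofMul_zpow, map_zsmul, logEmbedding_fundSystem, hB, Module.Basis.ofZLatticeBasis_apply, Int.cast_smul_eq_zsmul]
  rw [this, Module.Basis.repr_sum_self]

end PIT

end


section
namespace PIT
open NumberField NumberField.InfinitePlace NumberField.Units NumberField.Units.dirichletUnitTheorem
  NumberField.mixedEmbedding
open scoped nonZeroDivisors

variable (K : Type*) [Field K] [NumberField K]

/-- norm of an ideal as a real number -/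
noncomputable def nI (I : (Ideal (𝓞 K))⁰) : ℝ := (Ideal.absNorm (I : Ideal (𝓞 K)) : ℝ)

theorem one_le_nI (I : (Ideal (𝓞 K))⁰) : 1 ≤ nI K I := by
  unfold nI
  exact_mod_cast Nat.one_le_iff_ne_zero.mpr (Ideal.absNorm_ne_zero_of_nonZeroDivisors I)

theorem nI_mul (I J : (Ideal (𝓞 K))⁰) : nI K (I * J) = nI K I * nI K J := by
  simp [nI]

theorem nI_fin (x : ℝ) : {I : (Ideal (𝓞 K))⁰ | nI K I ≤ x}.Finite := by
  have hf := Ideal.finite_setOfPred_absNorm_le (S := 𝓞 K) ⌊x⌋₊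
  refine (hf.preimage (f := fun I : (Ideal (𝓞 K))⁰ => (I : Ideal (𝓞 K)))
    Subtype.val_injective.injOn).subset ?_
  intro I hI
  exact Nat.le_floor hI

theorem gg_fin {x : ℝ} (hx : 0 < x) : {I : (Ideal (𝓞 K))⁰ | gg (nI K I / x) ≠ 0}.Finite := by
  refine (nI_fin K x).subset ?_
  intro I hI
  by_contra! h
  exact hI (gg_zero (by rw [one_le_div hx]; exact (not_le.mp h).le))

theorem FF_smul {t : ℝ} (ht : 0 < t) (x : mixedSpace K) (hx : mixedEmbedding.norm x ≠ 0) :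
    FF K (t⁻¹ • x) = phi K x * gg (mixedEmbedding.norm x / t ^ Module.finrank ℚ K) := by
  unfold FF phi
  rw [logMap_real_smul hx (by positivity), mixedEmbedding.norm_smul, abs_of_pos (by positivity)]
  congr 2
  rw [inv_pow]
  field_simp

theorem norm_emb (a : 𝓞 K) : mixedEmbedding.norm (mixedEmbedding K (a : K)) =
    (Ideal.absNorm (Ideal.span {a}) : ℝ) := by
  rw [mixedEmbedding.norm_eq_norm, Ideal.absNorm_span_singleton, ← Algebra.coe_norm_int]
  rw [Nat.cast_natAbs]
  push_cast
  rfl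

theorem class_sum (J : (Ideal (𝓞 K))⁰) {t : ℝ} (ht : 0 < t) :
    ∑' a : Submodule.span ℤ (Set.range (fractionalIdealLatticeBasis K (FractionalIdeal.mk0 K J))),
      FF K (t⁻¹ • (a : mixedSpace K)) =
    torsionOrder K * ∑' I : {I : (Ideal (𝓞 K))⁰ // ClassGroup.mk0 I = (ClassGroup.mk0 J)⁻¹},
      gg (nI K J * nI K I / t ^ Module.finrank ℚ K) := by
  classical
  have hgen : ∀ I : {I : (Ideal (𝓞 K))⁰ // ClassGroup.mk0 I = (ClassGroup.mk0 J)⁻¹},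
      ∃ a : 𝓞 K, ((J * I.1 : (Ideal (𝓞 K))⁰) : Ideal (𝓞 K)) = Ideal.span {a} := by
    rintro ⟨I, hI⟩
    have : ClassGroup.mk0 (J * I) = 1 := by rw [_root_.map_mul, hI, mul_inv_cancel]
    obtain ⟨a, ha⟩ := ((ClassGroup.mk0_eq_one_iff (J * I).2).mp this).principal
    exact ⟨a, ha⟩
  choose al hal using hgen
  have al0 : ∀ I, al I ≠ 0 := by
    intro I h
    have := hal I
    rw [h] at this
    have h2 := nonZeroDivisors.coe_ne_zero (J * I.1)
    rw [this] at h2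
    simp at h2
  have nal : ∀ I, mixedEmbedding.norm (mixedEmbedding K (al I : K)) = nI K J * nI K I := by
    intro I
    rw [norm_emb, ← hal, ← nI_mul]
    rfl
  have nal0 : ∀ I, mixedEmbedding.norm (mixedEmbedding K (al I : K)) ≠ 0 := by
    intro I
    rw [nal]
    have := one_le_nI K J
    have := one_le_nI K I
    positivity
  have memJ : ∀ x : mixedSpace K, x ∈ Submodule.span ℤ
      (Set.range (fractionalIdealLatticeBasis K (FractionalIdeal.mk0 K J))) ↔
      ∃ a : 𝓞 K, a ∈ (J : Ideal (𝓞 K)) ∧ mixedEmbedding K (a : K) = x := by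
    intro x
    rw [mem_span_fractionalIdealLatticeBasis]
    simp only [FractionalIdeal.coe_mk0, Set.mem_image, SetLike.mem_coe, FractionalIdeal.mem_coeIdeal]
    constructor
    · rintro ⟨_, ⟨a, ha, rfl⟩, rfl⟩
      exact ⟨a, ha, rfl⟩
    · rintro ⟨a, ha, rfl⟩
      exact ⟨_, ⟨a, ha, rfl⟩, rfl⟩
  have ualJ : ∀ I (u : (𝓞 K)ˣ), (u * al I : 𝓞 K) ∈ (J : Ideal (𝓞 K)) := by
    intro I u
    apply Ideal.mul_mem_left
    have : al I ∈ (J : Ideal (𝓞 K)) * (I.1 : Ideal (𝓞 K)) := by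
      have h := hal I
      rw [Submonoid.coe_mul] at h
      rw [h]; exact Ideal.mem_span_singleton_self _
    exact Ideal.mul_le_left this
  let X := {I : (Ideal (𝓞 K))⁰ // ClassGroup.mk0 I = (ClassGroup.mk0 J)⁻¹}
  let Ψ : X × (𝓞 K)ˣ →
      Submodule.span ℤ (Set.range (fractionalIdealLatticeBasis K (FractionalIdeal.mk0 K J))) :=
    fun p => ⟨mixedEmbedding K ((p.2 * al p.1 : 𝓞 K) : K), (memJ _).mpr ⟨_, ualJ p.1 p.2, rfl⟩⟩
  have Ψinj : Function.Injective Ψ := by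
    rintro ⟨I, u⟩ ⟨I', u'⟩ h
    have h1 : (u * al I : 𝓞 K) = u' * al I' := by
      have := congrArg Subtype.val h
      exact RingOfIntegers.ext (mixedEmbedding_injective K this)
    have h2 : Ideal.span {al I} = Ideal.span {al I'} := by
      rw [← Ideal.span_singleton_mul_left_unit u.isUnit (al I), h1,
        Ideal.span_singleton_mul_left_unit u'.isUnit]
    rw [← hal, ← hal] at h2
    have h3 : I = I' := by
      have := Subtype.ext h2
      exact Subtype.ext (mul_left_cancel this)
    subst h3
    have := mul_right_cancel₀ (al0 I) h1
    rw [Units.val_inj.mp this]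
  have Ψsurj : Function.support (fun a : Submodule.span ℤ
      (Set.range (fractionalIdealLatticeBasis K (FractionalIdeal.mk0 K J))) =>
        FF K (t⁻¹ • (a : mixedSpace K))) ⊆ Set.range Ψ := by
    rintro ⟨x, hx⟩ hne
    obtain ⟨a, ha, rfl⟩ := (memJ x).mp hx
    have a0 : a ≠ 0 := by
      rintro rfl
      apply hne
      simp [FF, gg]
    have hspan : Ideal.span {a} ∈ (Ideal (𝓞 K))⁰ := by
      rw [mem_nonZeroDivisors_iff_ne_zero]
      simpa using a0
    have hdvd : (J : Ideal (𝓞 K)) ∣ Ideal.span {a} := by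
      rw [Ideal.dvd_span_singleton]; exact ha
    obtain ⟨I, hI⟩ := hdvd
    have hI0 : I ∈ (Ideal (𝓞 K))⁰ := by
      rw [mem_nonZeroDivisors_iff_ne_zero]
      rintro rfl
      rw [mul_zero] at hI
      rw [hI] at hspan
      exact (mem_nonZeroDivisors_iff_ne_zero.mp hspan) rfl
    have hcl : ClassGroup.mk0 ⟨I, hI0⟩ = (ClassGroup.mk0 J)⁻¹ := by
      rw [eq_inv_iff_mul_eq_one, mul_comm, ← _root_.map_mul]
      have e : J * ⟨I, hI0⟩ = ⟨Ideal.span {a}, hspan⟩ := Subtype.ext hI.symm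
      rw [e, ClassGroup.mk0_eq_one_iff]
      exact ⟨a, rfl⟩
    have h2 : Ideal.span {al ⟨⟨I, hI0⟩, hcl⟩} = Ideal.span {a} := by
      rw [← hal]; exact hI.symm
    obtain ⟨u, hu⟩ := Ideal.span_singleton_eq_span_singleton.mp h2
    refine ⟨(⟨⟨I, hI0⟩, hcl⟩, u), ?_⟩
    apply Subtype.ext
    show mixedEmbedding K ((u * al _ : 𝓞 K) : K) = mixedEmbedding K (a : K)
    rw [mul_comm, hu]
  rw [← Ψinj.tsum_eq Ψsurj]
  have hval : ∀ p : X × (𝓞 K)ˣ, FF K (t⁻¹ • ((Ψ p : mixedSpace K))) =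
      phi K (p.2 • mixedEmbedding K (al p.1 : K)) *
        gg (nI K J * nI K p.1 / t ^ Module.finrank ℚ K) := by
    intro p
    have e : (Ψ p : mixedSpace K) = p.2 • mixedEmbedding K (al p.1 : K) := by
      show mixedEmbedding K ((p.2 * al p.1 : 𝓞 K) : K) = _
      rw [unitSMul_smul, ← _root_.map_mul]
      simp
    rw [e, FF_smul K ht _ (by rw [norm_unit_smul]; exact nal0 _), norm_unit_smul, nal]
  simp_rw [hval]
  have hs : ∀ I : X, HasSum (fun u : (𝓞 K)ˣ => phi K (u • mixedEmbedding K (al I : K)) *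
        gg (nI K J * nI K I / t ^ Module.finrank ℚ K))
        (torsionOrder K * gg (nI K J * nI K I / t ^ Module.finrank ℚ K)) := fun I =>
    (hasSum_units K _ (nal0 I)).mul_right _
  have hgs : Summable (fun I : X => (torsionOrder K : ℝ) *
      gg (nI K J * nI K I / t ^ Module.finrank ℚ K)) := by
    apply Summable.mul_left
    apply summable_of_hasFiniteSupport
    have J1 := one_le_nI K J
    have := gg_fin K (x := t ^ Module.finrank ℚ K / nI K J) (by positivity)
    refine (this.preimage (f := fun I : X => I.1) Subtype.val_injective.injOn).subset ?_
    intro I hI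
    show gg (nI K I / (t ^ Module.finrank ℚ K / nI K J)) ≠ 0
    rw [div_div_eq_mul_div, mul_comm]
    exact hI
  have hsum : Summable (fun p : X × (𝓞 K)ˣ => phi K (p.2 • mixedEmbedding K (al p.1 : K)) *
        gg (nI K J * nI K p.1 / t ^ Module.finrank ℚ K)) := by
    rw [summable_prod_of_nonneg]
    · refine ⟨fun I => (hs I).summable, ?_⟩
      convert hgs using 2 with I
      exact (hs I).tsum_eq
    · intro p
      refine mul_nonneg (Finset.prod_nonneg fun i _ => tau_nonneg _) (gg_nonneg ?_)
      have := one_le_nI K J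
      have := one_le_nI K p.1
      positivity
  rw [hsum.tsum_prod' (fun I => (hs I).summable), ← tsum_mul_left]
  exact tsum_congr fun I => (hs I).tsum_eq

/-- smooth ideal count -/
noncomputable def GG (x : ℝ) : ℝ := ∑' I : (Ideal (𝓞 K))⁰, gg (nI K I / x)

theorem class_asymp (C : ClassGroup (𝓞 K)) : ∃ c A : ℝ, ∀ x : ℝ, 1 ≤ x →
    |(∑' I : {I : (Ideal (𝓞 K))⁰ // ClassGroup.mk0 I = C}, gg (nI K I / x)) - c * x| ≤
      A * x ^ (1 - (Module.finrank ℚ K : ℝ)⁻¹) := by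
  classical
  obtain ⟨J, hJ⟩ := ClassGroup.mk0_surjective C⁻¹
  obtain ⟨A, R, h1, h2⟩ := FF_lip K
  obtain ⟨c, C', h3⟩ := lattice_sum (MeasureTheory.volume)
    (fractionalIdealLatticeBasis K (FractionalIdeal.mk0 K J)) (FF K) h1 h2
  rw [mixedEmbedding.finrank] at h3
  have d0 : 0 < Module.finrank ℚ K := Module.finrank_pos
  set d := Module.finrank ℚ K with hd
  have J1 := one_le_nI K J
  set w : ℝ := ((torsionOrder K : ℕ) : ℝ) with hw
  have w0 : 0 < w := by rw [hw]; exact_mod_cast Nat.pos_of_ne_zero (torsionOrder_ne_zero K)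
  have hJ' : C = (ClassGroup.mk0 J)⁻¹ := by rw [hJ, inv_inv]
  subst hJ'
  refine ⟨w⁻¹ * c * nI K J, w⁻¹ * |C'| * nI K J, fun x hx => ?_⟩
  have x0 : 0 < x := by linarith
  set y := x * nI K J with hy
  have y1 : 1 ≤ y := by rw [hy]; nlinarith
  set t := y ^ ((d:ℝ)⁻¹) with ht
  have t1 : 1 ≤ t := Real.one_le_rpow y1 (by positivity)
  have td : t ^ d = y := by
    rw [ht]; exact Real.rpow_inv_natCast_pow (by linarith) d0.ne'
  have h := h3 t t1
  rw [class_sum K J (by linarith)] at h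
  have e : ∀ I, nI K J * nI K I / y = nI K I / x := by
    intro I; rw [hy]; field_simp
  rw [← hd, ← hw, td] at h
  simp_rw [e] at h
  set S := ∑' I : {I : (Ideal (𝓞 K))⁰ // ClassGroup.mk0 I = (ClassGroup.mk0 J)⁻¹}, gg (nI K I / x)
  have e2 : S - w⁻¹ * c * nI K J * x = w⁻¹ * (w * S - c * y) := by
    rw [hy]; field_simp
  rw [e2, abs_mul, abs_of_pos (by positivity), mul_assoc, mul_assoc]
  refine mul_le_mul_of_nonneg_left (h.trans ?_) (by positivity)
  have e3 : t⁻¹ ≤ x ^ (-(d:ℝ)⁻¹) := by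
    rw [ht, Real.rpow_neg x0.le]
    apply inv_anti₀ (by positivity)
    apply Real.rpow_le_rpow x0.le _ (by positivity)
    rw [hy]; nlinarith
  calc C' * (y * t⁻¹) ≤ |C'| * (y * x ^ (-(d:ℝ)⁻¹)) := by
        have := le_abs_self C'
        gcongr
    _ = |C'| * (nI K J * x ^ (1 - (d:ℝ)⁻¹)) := by
        rw [hy, sub_eq_add_neg, Real.rpow_add x0, Real.rpow_one]; ring

theorem GG_asymp : ∃ c A : ℝ, 0 ≤ A ∧ ∀ x : ℝ, 1 ≤ x →
    |GG K x - c * x| ≤ A * x ^ (1 - (Module.finrank ℚ K : ℝ)⁻¹) := by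
  choose c A h using class_asymp K
  refine ⟨∑ C, c C, ∑ C, |A C|, Finset.sum_nonneg fun _ _ => abs_nonneg _, fun x hx => ?_⟩
  have e : GG K x = ∑ C, ∑' I : {I : (Ideal (𝓞 K))⁰ // ClassGroup.mk0 I = C}, gg (nI K I / x) := by
    unfold GG
    have hs : Summable (fun I : (Ideal (𝓞 K))⁰ => gg (nI K I / x)) :=
      summable_of_hasFiniteSupport (gg_fin K (by linarith))
    rw [← (Equiv.sigmaFiberEquiv (fun I : (Ideal (𝓞 K))⁰ => ClassGroup.mk0 I)).tsum_eq]
    rw [Summable.tsum_sigma, tsum_fintype]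
    · rfl
    · exact (Equiv.sigmaFiberEquiv (fun I : (Ideal (𝓞 K))⁰ => ClassGroup.mk0 I)).summable_iff.mpr hs
  rw [e, Finset.sum_mul, Finset.sum_mul, ← Finset.sum_sub_distrib]
  refine (Finset.abs_sum_le_sum_abs _ _).trans (Finset.sum_le_sum fun C _ => (h C x hx).trans ?_)
  have := le_abs_self (A C)
  gcongr

end PIT

end


section
open Filter Topology MeasureTheory
namespace PIT

theorem conv_sum {ι : Type*} [Countable ι] (c : ι → ℂ) (hc : Summable fun i => ‖c i‖)
    (K : ℝ → ℂ) (hK : Integrable K) (l : ι → ℝ) :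
    ∫ u, ∑' i, c i * K (u - l i) = (∑' i, c i) * ∫ u, K u := by
  have h := hasSum_integral_of_summable_integral_norm (μ := volume)
    (F := fun i u => c i * K (u - l i)) (fun i => (hK.comp_sub_right (l i)).const_mul _) (by
      simp_rw [norm_mul, integral_const_mul]
      have : ∀ i, ∫ u, ‖K (u - l i)‖ = ∫ u, ‖K u‖ := fun i =>
        integral_sub_right_eq_self (fun u => ‖K u‖) (l i)
      simp_rw [this]
      exact hc.mul_right _)
  rw [← h.tsum_eq, ← tsum_mul_right]
  refine tsum_congr fun i => ?_
  rw [integral_const_mul, integral_sub_right_eq_self]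

/-- exponential kernel -/
noncomputable def ek (a : ℂ) (v : ℝ) : ℂ := Set.indicator (Set.Ici 0) (fun v : ℝ => Complex.exp (-a * v)) v

theorem ek_int {a : ℂ} (ha : 0 < a.re) : Integrable (ek a) := by
  unfold ek
  rw [integrable_indicator_iff measurableSet_Ici, integrableOn_Ici_iff_integrableOn_Ioi]
  exact integrableOn_exp_mul_complex_Ioi (by simpa using ha) 0

theorem ek_integral {a : ℂ} (ha : 0 < a.re) : ∫ v, ek a v = 1 / a := by
  unfold ek
  rw [integral_indicator measurableSet_Ici, integral_Ici_eq_integral_Ioi,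
    integral_exp_mul_complex_Ioi (by simpa using ha) 0]
  simp

theorem laplace_diff (E : ℝ → ℝ) (hE : Measurable E) {A θ : ℝ} (A0 : 0 ≤ A)
    (hb : ∀ u, 0 ≤ u → |E u| ≤ A * Real.exp (θ * u)) (s : ℂ) (hs : θ < s.re) :
    IntegrableOn (fun u : ℝ => (E u : ℂ) * Complex.exp (-s * u)) (Set.Ici 0) ∧
    DifferentiableAt ℂ (fun s : ℂ => ∫ u in Set.Ici (0:ℝ), (E u : ℂ) * Complex.exp (-s * u)) s := by
  set ε := (s.re - θ) / 2 with hε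
  have ε0 : 0 < ε := by rw [hε]; linarith
  have hm : ∀ s : ℂ, AEStronglyMeasurable (fun u : ℝ => (E u : ℂ) * Complex.exp (-s * u))
      (volume.restrict (Set.Ici 0)) := by
    intro s
    apply Measurable.aestronglyMeasurable
    have : Measurable fun u : ℝ => Complex.exp (-s * u) := by fun_prop
    exact (Complex.measurable_ofReal.comp hE).mul this
  have nb : ∀ s : ℂ, ∀ u, 0 ≤ u → ‖(E u : ℂ) * Complex.exp (-s * u)‖ ≤
      A * Real.exp ((θ - s.re) * u) := by
    intro s u hu
    rw [norm_mul, Complex.norm_real, Complex.norm_exp, Real.norm_eq_abs]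
    have : (-s * u).re = -s.re * u := by simp
    rw [this, sub_mul, sub_eq_add_neg, Real.exp_add, ← mul_assoc, ← neg_mul]
    gcongr
    exact hb u hu
  have hIntg : ∀ s : ℂ, θ < s.re → IntegrableOn (fun u : ℝ => (E u : ℂ) * Complex.exp (-s * u))
      (Set.Ici 0) := by
    intro s hs
    have g : IntegrableOn (fun u : ℝ => A * Real.exp ((θ - s.re) * u)) (Set.Ici 0) := by
      rw [integrableOn_Ici_iff_integrableOn_Ioi]
      exact (integrableOn_exp_mul_Ioi (by linarith) 0).const_mul A
    refine Integrable.mono' g (hm s) ?_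
    rw [ae_restrict_iff' measurableSet_Ici]
    exact Eventually.of_forall fun u hu => nb s u hu
  refine ⟨hIntg s hs, ?_⟩
  have := hasDerivAt_integral_of_dominated_loc_of_deriv_le (𝕜 := ℂ)
    (μ := volume.restrict (Set.Ici (0:ℝ)))
    (F := fun s u => (E u : ℂ) * Complex.exp (-s * u))
    (F' := fun s u => (E u : ℂ) * (Complex.exp (-s * u) * (-u)))
    (bound := fun u => A * (2 / ε) * Real.exp (-(ε/2) * u)) (x₀ := s)
    (s := {z : ℂ | θ + ε < z.re}) ?_ (Eventually.of_forall hm) (hIntg s hs) ?_ ?_ ?_ ?_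
  · exact this.2.differentiableAt
  · apply IsOpen.mem_nhds (isOpen_lt continuous_const Complex.continuous_re)
    show θ + ε < s.re
    rw [hε]; linarith
  · apply Measurable.aestronglyMeasurable
    have : Measurable fun u : ℝ => Complex.exp (-s * u) * (-u : ℂ) := by fun_prop
    exact (Complex.measurable_ofReal.comp hE).mul this
  · rw [ae_restrict_iff' measurableSet_Ici]
    refine Eventually.of_forall fun u hu z hz => ?_
    have hu : 0 ≤ u := hu
    have hz : θ + ε < z.re := hz
    rw [← mul_assoc, norm_mul]
    have h1 : ‖(-u : ℂ)‖ = u := by rw [norm_neg, Complex.norm_real, Real.norm_eq_abs, abs_of_nonneg hu]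
    rw [h1]
    have h2 := nb z u hu
    have h3 : Real.exp ((θ - z.re) * u) ≤ Real.exp (-ε * u) := by
      apply Real.exp_le_exp.mpr; nlinarith
    have h4 : u ≤ 2 / ε * Real.exp (ε / 2 * u) := by
      have := Real.add_one_le_exp (ε / 2 * u)
      have : ε / 2 * u ≤ Real.exp (ε / 2 * u) := by linarith
      calc u = 2 / ε * (ε / 2 * u) := by field_simp
        _ ≤ _ := by gcongr
    calc _ ≤ A * Real.exp (-ε * u) * (2 / ε * Real.exp (ε / 2 * u)) := by
          have := h2.trans (mul_le_mul_of_nonneg_left h3 A0)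
          gcongr
      _ = A * (2 / ε) * (Real.exp (-ε * u) * Real.exp (ε / 2 * u)) := by ring
      _ = _ := by rw [← Real.exp_add]; congr 2; ring
  · show IntegrableOn (fun u : ℝ => A * (2 / ε) * Real.exp (-(ε/2) * u)) (Set.Ici 0) volume
    rw [integrableOn_Ici_iff_integrableOn_Ioi]
    exact (integrableOn_exp_mul_Ioi (by linarith) 0).const_mul _
  · refine Eventually.of_forall fun u z _ => ?_
    have h1 : HasDerivAt (fun z : ℂ => -z * u) (-u : ℂ) z := by
      simpa using ((hasDerivAt_id z).neg.mul_const (u : ℂ))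
    exact (h1.cexp).const_mul _

theorem meas_tsum {ι : Type*} [Countable ι] (f : ι → ℝ → ℝ) (hf : ∀ i, Measurable (f i))
    (h0 : ∀ i x, 0 ≤ f i x) : Measurable fun x => ∑' i, f i x := by
  have : (fun x => ∑' i, f i x) = fun x => (∑' i, ENNReal.ofReal (f i x)).toReal := by
    funext x
    rw [ENNReal.tsum_toReal_eq (fun _ => ENNReal.ofReal_ne_top)]
    simp_rw [ENNReal.toReal_ofReal (h0 _ x)]
  rw [this]
  exact (Measurable.tsum fun i => (hf i).ennreal_ofReal).ennreal_toReal

end PIT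

end


section
open Filter Topology MeasureTheory
namespace PIT

/-- the function `n^{-s}` -/
noncomputable def cp (n : ℝ) (s : ℂ) : ℂ := Complex.exp (-s * (Real.log n : ℝ))

theorem norm_cp (n : ℝ) (s : ℂ) : ‖cp n s‖ = Real.exp (-s.re * Real.log n) := by
  unfold cp
  rw [Complex.norm_exp]; simp

theorem kk_key {n : ℝ} (hn : 1 ≤ n) (s : ℂ) (u : ℝ) :
    cp n s * (ek (s+1) (u - Real.log n) - ek (s+2) (u - Real.log n)) =
      Complex.exp (-s * u) * (gg (n / Real.exp u) : ℝ) := by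
  have n0 : 0 < n := by linarith
  by_cases h : Real.log n ≤ u
  · have h1 : n / Real.exp u = Real.exp (-(u - Real.log n)) := by
      rw [neg_sub, Real.exp_sub, Real.exp_log n0]
    have h2 : Real.exp (-(u - Real.log n)) ≤ 1 := by
      rw [Real.exp_le_one_iff]; linarith
    have hm : u - Real.log n ∈ Set.Ici (0:ℝ) := by simpa using h
    unfold cp ek gg
    rw [Set.indicator_of_mem hm, Set.indicator_of_mem hm, h1, max_eq_right (by linarith)]
    push_cast
    rw [mul_sub, ← Complex.exp_add, ← Complex.exp_add, mul_one_sub,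
      mul_sub (Complex.exp _),
      ← Complex.exp_add, ← Complex.exp_add, ← Complex.exp_add]
    congr 2 <;> ring
  · have hm : u - Real.log n ∉ Set.Ici (0:ℝ) := by simpa using h
    have h1 : gg (n / Real.exp u) = 0 := by
      apply gg_zero
      rw [le_div_iff₀ (Real.exp_pos _), one_mul]
      push Not at h
      exact (Real.exp_le_exp.mpr h.le).trans (Real.exp_log n0).le
    unfold ek
    rw [Set.indicator_of_notMem hm, Set.indicator_of_notMem hm, h1]
    simp

theorem kk_int {s : ℂ} (hs : 0 < s.re) : Integrable (fun v => ek (s+1) v - ek (s+2) v) :=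
  (ek_int (by simp; linarith)).sub (ek_int (by simp; linarith))

theorem kk_integral {s : ℂ} (hs : 0 < s.re) :
    ∫ v, (ek (s+1) v - ek (s+2) v) = 1 / ((s+1) * (s+2)) := by
  have h1 : s + 1 ≠ 0 := by
    intro h; have := congrArg Complex.re h; simp at this; linarith
  have h2 : s + 2 ≠ 0 := by
    intro h; have := congrArg Complex.re h; simp at this; linarith
  rw [integral_sub (ek_int (by simp; linarith)) (ek_int (by simp; linarith)),
    ek_integral (by simp; linarith), ek_integral (by simp; linarith)]
  field_simp
  ring

section
variable {ι : Type*} [Countable ι] {N : ι → ℝ} (hN : ∀ i, 1 ≤ N i) 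
  {c A θ : ℝ} (hA : 0 ≤ A) (hθ : θ < 1)
  (hfin : ∀ x : ℝ, 0 < x → {i | gg (N i / x) ≠ 0}.Finite)
  (hG : ∀ x : ℝ, 1 ≤ x → |(∑' i, gg (N i / x)) - c * x| ≤ A * x ^ θ)

include hN in
theorem gN_nonneg (u : ℝ) (i : ι) : 0 ≤ gg (N i / Real.exp u) :=
  gg_nonneg (div_nonneg (by linarith [hN i]) (Real.exp_pos _).le)

include hN in
theorem gN_neg {u : ℝ} (hu : u ≤ 0) (i : ι) : gg (N i / Real.exp u) = 0 := by
  apply gg_zero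
  rw [le_div_iff₀ (Real.exp_pos _), one_mul]
  exact (Real.exp_le_one_iff.mpr hu).trans (hN i)

include hG in
theorem G_exp (u : ℝ) (hu : 0 ≤ u) :
    |(∑' i, gg (N i / Real.exp u)) - c * Real.exp u| ≤ A * Real.exp (θ * u) := by
  have := hG (Real.exp u) (Real.one_le_exp hu)
  rwa [← Real.exp_mul, mul_comm u θ] at this

include hN hA hθ hfin hG in
theorem cp_summable {σ : ℝ} (hσ : 1 < σ) :
    Summable fun i => Real.exp (-σ * Real.log (N i)) := by
  set I0 : ℝ := ∫ u in Set.Ici (0:ℝ), (|c| + A) * Real.exp ((1 - σ) * u) with hI0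
  have hgI : IntegrableOn (fun u : ℝ => (|c| + A) * Real.exp ((1 - σ) * u)) (Set.Ici 0) := by
    rw [integrableOn_Ici_iff_integrableOn_Ioi]
    exact (integrableOn_exp_mul_Ioi (by linarith) 0).const_mul _
  refine summable_of_sum_le (c := (σ+1)*(σ+2) * I0) (fun i => (Real.exp_pos _).le) fun S => ?_
  have e1 : ∫ u : ℝ, ∑ i ∈ S, Complex.exp (-(σ:ℂ) * u) * (gg (N i / Real.exp u) : ℝ) =
      (∑ i ∈ S, (Real.exp (-σ * Real.log (N i)) : ℂ)) * (1 / (((σ:ℂ)+1) * (σ+2))) := by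
    have hs : 0 < (σ:ℂ).re := by simp; linarith
    rw [integral_finsetSum, Finset.sum_mul]
    · refine Finset.sum_congr rfl fun i _ => ?_
      simp_rw [← kk_key (hN i)]
      rw [integral_const_mul,
        integral_sub_right_eq_self (fun v => ek ((σ:ℂ)+1) v - ek ((σ:ℂ)+2) v), kk_integral hs]
      unfold cp; push_cast; rfl
    · intro i _
      simp_rw [← kk_key (hN i)]
      exact ((kk_int hs).comp_sub_right _).const_mul _
  have e2 : ‖∫ u : ℝ, ∑ i ∈ S, Complex.exp (-(σ:ℂ) * u) * (gg (N i / Real.exp u) : ℝ)‖ ≤ I0 := by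
    rw [hI0, ← integral_indicator measurableSet_Ici]
    refine norm_integral_le_of_norm_le (hgI.integrable_indicator measurableSet_Ici)
      (Eventually.of_forall fun u => ?_)
    by_cases hu : 0 ≤ u
    · rw [Set.indicator_of_mem (by exact hu), ← Finset.mul_sum, norm_mul, Complex.norm_exp,
        ← Complex.ofReal_sum, Complex.norm_real, Real.norm_eq_abs,
        abs_of_nonneg (Finset.sum_nonneg fun i _ => gN_nonneg hN u i)]
      have h1 : ∑ i ∈ S, gg (N i / Real.exp u) ≤ ∑' i, gg (N i / Real.exp u) :=
        (summable_of_hasFiniteSupport (hfin _ (Real.exp_pos u))).sum_le_tsum _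
          fun i _ => gN_nonneg hN u i
      have h2 := abs_le.mp (G_exp hG u hu)
      have h3 : Real.exp (θ * u) ≤ Real.exp u := Real.exp_le_exp.mpr (by nlinarith)
      have h4 : ∑ i ∈ S, gg (N i / Real.exp u) ≤ (|c| + A) * Real.exp u := by
        have := mul_le_mul_of_nonneg_left h3 hA
        have := mul_le_mul_of_nonneg_right (le_abs_self c) (Real.exp_pos u).le
        linarith [h2.2]
      have h5 : (-(σ:ℂ) * u).re = -σ * u := by simp
      rw [h5]
      calc _ ≤ Real.exp (-σ * u) * ((|c| + A) * Real.exp u) := by gcongr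
        _ = (|c| + A) * (Real.exp (-σ * u) * Real.exp u) := by ring
        _ = _ := by rw [← Real.exp_add]; congr 2; ring
    · rw [Set.indicator_of_notMem (by exact hu)]
      push Not at hu
      simp [gN_neg hN hu.le]
  rw [e1, norm_mul] at e2
  have e3 : ‖(1:ℂ) / (((σ:ℂ)+1) * (σ+2))‖ = 1 / ((σ+1)*(σ+2)) := by
    have : (1:ℂ) / (((σ:ℂ)+1) * (σ+2)) = ((1 / ((σ+1)*(σ+2)) : ℝ) : ℂ) := by push_cast; rfl
    rw [this, Complex.norm_real, Real.norm_eq_abs, abs_of_nonneg]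
    have : 0 < (σ+1)*(σ+2) := by nlinarith
    positivity
  have e4 : ‖∑ i ∈ S, (Real.exp (-σ * Real.log (N i)) : ℂ)‖ = ∑ i ∈ S, Real.exp (-σ * Real.log (N i)) := by
    rw [← Complex.ofReal_sum, Complex.norm_real, Real.norm_eq_abs,
      abs_of_nonneg (Finset.sum_nonneg fun i _ => (Real.exp_pos _).le)]
  rw [e3, e4, mul_one_div, div_le_iff₀ (by nlinarith)] at e2
  linarith

include hN hA hθ hfin hG in
theorem cp_summable_norm {s : ℂ} (hs : 1 < s.re) : Summable fun i => ‖cp (N i) s‖ := by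
  simp_rw [norm_cp]
  exact cp_summable hN hA hθ hfin hG hs

include hN hA hθ hfin hG in
theorem Z_cont : ∃ H : ℂ → ℂ, (∀ s : ℂ, θ < s.re → DifferentiableAt ℂ H s) ∧
    ∀ s : ℂ, 1 < s.re → ∑' i, cp (N i) s = (s + 1) * (s + 2) * (c / (s - 1) + H s) := by
  have hmG : Measurable fun u : ℝ => ∑' i, gg (N i / Real.exp u) := by
    refine meas_tsum _ (fun i => ?_) (fun i u => gN_nonneg hN u i)
    unfold gg; fun_prop
  have hE : Measurable fun u : ℝ => (∑' i, gg (N i / Real.exp u)) - c * Real.exp u :=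
    hmG.sub (by fun_prop)
  refine ⟨fun s => ∫ u in Set.Ici (0:ℝ),
    (((∑' i, gg (N i / Real.exp u)) - c * Real.exp u : ℝ) : ℂ) * Complex.exp (-s * u), fun s hs =>
      (laplace_diff _ hE hA (G_exp hG) s hs).2, fun s hs => ?_⟩
  have s0 : 0 < s.re := by linarith
  have h1 := conv_sum (fun i => cp (N i) s) (cp_summable_norm hN hA hθ hfin hG hs) _ (kk_int s0)
    (fun i => Real.log (N i))
  rw [kk_integral s0] at h1
  have n1 : s + 1 ≠ 0 := by
    intro h; have := congrArg Complex.re h; simp at this; linarith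
  have n2 : s + 2 ≠ 0 := by
    intro h; have := congrArg Complex.re h; simp at this; linarith
  have n3 : s - 1 ≠ 0 := by
    intro h; have := congrArg Complex.re h; simp at this; linarith
  have h2 : ∑' i, cp (N i) s = (s+1)*(s+2) *
      ∫ u : ℝ, ∑' i, cp (N i) s * (ek (s+1) (u - Real.log (N i)) - ek (s+2) (u - Real.log (N i))) := by
    rw [h1]; field_simp
  rw [h2]
  congr 1
  have h3 : ∀ u : ℝ, ∑' i, cp (N i) s * (ek (s+1) (u - Real.log (N i)) - ek (s+2) (u - Real.log (N i)))
      = Set.indicator (Set.Ici (0:ℝ)) (fun u : ℝ =>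
        (((∑' i, gg (N i / Real.exp u)) - c * Real.exp u : ℝ) : ℂ) * Complex.exp (-s * u) +
          c * Complex.exp (-(s - 1) * u)) u := by
    intro u
    simp_rw [kk_key (hN _)]
    by_cases hu : 0 ≤ u
    · rw [Set.indicator_of_mem (by exact hu), tsum_mul_left, ← Complex.ofReal_tsum]
      have : Complex.exp (-(s-1) * u) = Complex.exp (-s * u) * Complex.exp u := by
        rw [← Complex.exp_add]; congr 1; ring
      rw [this]
      push_cast; ring
    · rw [Set.indicator_of_notMem (by exact hu)]
      push Not at hu
      simp [gN_neg hN hu.le]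
  simp_rw [h3]
  rw [integral_indicator measurableSet_Ici, integral_add (laplace_diff _ hE hA (G_exp hG) s (by linarith)).1,
    integral_const_mul, add_comm]
  · congr 1
    rw [integral_Ici_eq_integral_Ioi, integral_exp_mul_complex_Ioi (by simp; linarith) 0]
    have n4 : 1 - s ≠ 0 := by rw [← neg_sub]; exact neg_ne_zero.mpr n3
    simp only [Complex.ofReal_zero, mul_zero, Complex.exp_zero, neg_div_neg_eq, mul_one_div]
  · apply Integrable.const_mul
    show IntegrableOn (fun u : ℝ => Complex.exp (-(s-1) * u)) (Set.Ici 0) volume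
    rw [integrableOn_Ici_iff_integrableOn_Ioi]
    exact integrableOn_exp_mul_complex_Ioi (by simp; linarith) 0

end
end PIT

end


section
namespace PIT
open Filter Topology MeasureTheory NumberField
open scoped nonZeroDivisors

variable (K : Type*) [Field K] [NumberField K]

theorem GG_lower : ∃ δ > 0, ∀ᶠ x : ℝ in atTop, δ ≤ GG K x / x := by
  have h := NumberField.Ideal.tendsto_norm_le_div_atTop₀ K
  rw [← dedekindZeta_residue_def] at h
  have κ0 := dedekindZeta_residue_pos K
  set κ := dedekindZeta_residue K
  set n : ℝ → ℝ := fun s => (Nat.card {I : (Ideal (𝓞 K))⁰ // (Ideal.absNorm (I : Ideal (𝓞 K)) : ℝ) ≤ s} : ℝ) with hn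
  have hnc : ∀ s, n s = ((nI_fin K s).toFinset.card : ℝ) := by
    intro s
    rw [hn]
    simp only
    rw [← Set.ncard_eq_toFinset_card _ (nI_fin K s)]
    rfl
  have h1 : Tendsto (fun x : ℝ => n (3/4 * x) / (3/4 * x)) atTop (𝓝 κ) :=
    h.comp (tendsto_id.const_mul_atTop (by norm_num))
  have h2 : Tendsto (fun x : ℝ => n (1/4 * x) / (1/4 * x)) atTop (𝓝 κ) :=
    h.comp (tendsto_id.const_mul_atTop (by norm_num))
  have h3 := ((h1.const_mul (3/4)).sub (h2.const_mul (1/4))).const_mul (3/16)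
  refine ⟨κ / 16, by positivity, ?_⟩
  have h4 : κ / 16 < 3/16 * (3/4 * κ - 1/4 * κ) := by linarith
  filter_upwards [h3.eventually (lt_mem_nhds h4), eventually_gt_atTop 0] with x hx x0
  refine hx.le.trans ?_
  rw [le_div_iff₀ x0]
  have e : 3 / 16 * (3 / 4 * (n (3/4 * x) / (3/4 * x)) - 1/4 * (n (1/4 * x) / (1/4 * x))) * x
      = (n (3/4 * x) - n (1/4 * x)) * (3/16) := by field_simp
  rw [e, hnc, hnc]
  classical
  set S := (nI_fin K (3/4 * x)).toFinset
  set T := (nI_fin K (1/4 * x)).toFinset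
  have h5 : (S.card : ℝ) - T.card ≤ (S \ T).card := by
    have := Finset.le_card_sdiff T S
    have : S.card ≤ (S \ T).card + T.card := by omega
    have : (S.card : ℝ) ≤ (S \ T).card + T.card := by exact_mod_cast this
    linarith
  have h6 : ∑ I ∈ S \ T, gg (nI K I / x) ≤ GG K x :=
    (summable_of_hasFiniteSupport (gg_fin K x0)).sum_le_tsum _
      fun i _ => gg_nonneg (div_nonneg (by linarith [one_le_nI K i]) x0.le)
  refine le_trans ?_ h6
  refine (mul_le_mul_of_nonneg_right h5 (by norm_num)).trans ?_
  rw [← nsmul_eq_mul]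
  refine Finset.card_nsmul_le_sum _ _ _ fun I hI => ?_
  simp only [S, T, Finset.mem_sdiff, Set.Finite.mem_toFinset, Set.mem_setOf_eq, not_le] at hI
  have a1 : nI K I / x ≤ 3/4 := by rw [div_le_iff₀ x0]; exact hI.1
  have a2 : 1/4 ≤ nI K I / x := by rw [le_div_iff₀ x0]; exact hI.2.le
  unfold gg
  rw [max_eq_right (by linarith)]
  nlinarith

instance : Countable (Ideal (𝓞 K))⁰ := by
  have : (Set.univ : Set (Ideal (𝓞 K))⁰) = ⋃ n : ℕ, {I | nI K I ≤ n} := by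
    ext I
    simp only [Set.mem_univ, Set.mem_iUnion, true_iff]
    exact exists_nat_ge (nI K I)
  rw [← Set.countable_univ_iff, this]
  exact Set.countable_iUnion fun n => (nI_fin K n).countable

/-- the Dedekind zeta function as a sum over ideals -/
noncomputable def Z (s : ℂ) : ℂ := ∑' I : (Ideal (𝓞 K))⁰, cp (nI K I) s

theorem zeta_data : (∀ s : ℂ, 1 < s.re → Summable fun I : (Ideal (𝓞 K))⁰ => ‖cp (nI K I) s‖) ∧
    ∃ θ : ℝ, θ < 1 ∧ ∃ Y : ℂ → ℂ, (∀ s : ℂ, θ < s.re → DifferentiableAt ℂ Y s) ∧ Y 1 ≠ 0 ∧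
    ∀ s : ℂ, 1 < s.re → (s - 1) * Z K s = Y s := by
  obtain ⟨c, A, hA, h⟩ := GG_asymp K
  set θ := 1 - (Module.finrank ℚ K : ℝ)⁻¹ with hθ
  have hd : 0 < (Module.finrank ℚ K : ℝ)⁻¹ := by
    have : 0 < Module.finrank ℚ K := Module.finrank_pos
    positivity
  have hθ1 : θ < 1 := by rw [hθ]; linarith
  have hfin : ∀ x : ℝ, 0 < x → {I : (Ideal (𝓞 K))⁰ | gg (nI K I / x) ≠ 0}.Finite :=
    fun x hx => gg_fin K hx
  refine ⟨fun s hs => cp_summable_norm (one_le_nI K) hA hθ1 hfin h hs, θ, hθ1, ?_⟩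
  obtain ⟨H, hH, hZ⟩ := Z_cont (one_le_nI K) hA hθ1 hfin h
  have c0 : c ≠ 0 := by
    rintro rfl
    obtain ⟨δ, δ0, hδ⟩ := GG_lower K
    have h1 : Tendsto (fun x : ℝ => A * x ^ (-(Module.finrank ℚ K : ℝ)⁻¹)) atTop (𝓝 (A * 0)) :=
      (tendsto_rpow_neg_atTop hd).const_mul A
    rw [mul_zero] at h1
    obtain ⟨x, ⟨hx1, hx2⟩, hx3⟩ := ((hδ.and (h1.eventually (gt_mem_nhds δ0))).and
      (eventually_ge_atTop 1)).exists
    have h2 := h x hx3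
    have x0 : 0 < x := by linarith
    rw [zero_mul, sub_zero] at h2
    have h3 : GG K x / x ≤ A * x ^ (-(Module.finrank ℚ K : ℝ)⁻¹) := by
      rw [div_le_iff₀ x0]
      refine ((le_abs_self _).trans h2).trans (le_of_eq ?_)
      rw [mul_assoc, hθ, sub_eq_neg_add, Real.rpow_add x0, Real.rpow_one]
    linarith
  refine ⟨fun s => (s+1)*(s+2)*(c + (s-1) * H s), fun s hs => ?_, ?_, fun s hs => ?_⟩
  · have := hH s hs
    fun_prop
  · have : (c : ℂ) ≠ 0 := by exact_mod_cast c0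
    simp only [sub_self, zero_mul, add_zero]
    refine mul_ne_zero (by norm_num) this
  · have n3 : s - 1 ≠ 0 := by
      intro h; have := congrArg Complex.re h; simp at this; linarith
    unfold Z
    rw [hZ s hs]
    field_simp

end PIT

end


section
namespace PIT
open Filter Topology MeasureTheory NumberField IsDedekindDomain
open scoped nonZeroDivisors

variable (K : Type*) [Field K] [NumberField K]

theorem fiber_sum (I : Ideal (𝓞 K)) : I ≠ 0 →
    {q : HeightOneSpectrum (𝓞 K) × ℕ | q.1.asIdeal ^ (q.2 + 1) ∣ I}.Finite ∧
    ∑ᶠ q ∈ {q : HeightOneSpectrum (𝓞 K) × ℕ | q.1.asIdeal ^ (q.2 + 1) ∣ I},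
      Real.log (Ideal.absNorm q.1.asIdeal) = Real.log (Ideal.absNorm I) := by
  induction I using UniqueFactorizationMonoid.induction_on_prime with
  | h₁ => exact fun h => absurd rfl h
  | h₂ x hx =>
    intro _
    have : {q : HeightOneSpectrum (𝓞 K) × ℕ | q.1.asIdeal ^ (q.2 + 1) ∣ x} = ∅ := by
      ext q
      simp only [Set.mem_setOf_eq, Set.mem_empty_iff_false, iff_false]
      intro h
      have h1 := isUnit_of_dvd_unit ((dvd_pow_self _ (Nat.succ_ne_zero _)).trans h) hx
      exact q.1.prime.not_unit h1
    rw [this]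
    simp [Ideal.isUnit_iff.mp hx]
  | h₃ a p ha hp ih =>
    intro _
    obtain ⟨hf, hs⟩ := ih ha
    have hp0 : p ≠ ⊥ := hp.ne_zero
    have hpp : p.IsPrime := Ideal.isPrime_of_prime hp
    set P : HeightOneSpectrum (𝓞 K) := ⟨p, hpp, hp0⟩
    have fm : FiniteMultiplicity p a := FiniteMultiplicity.of_not_isUnit hp.not_unit ha
    set e := multiplicity p a
    have hpow : ∀ m, p ^ m ∣ a ↔ m ≤ e := fun m => fm.pow_dvd_iff_le_multiplicity
    have hset : {q : HeightOneSpectrum (𝓞 K) × ℕ | q.1.asIdeal ^ (q.2 + 1) ∣ p * a} =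
        insert (P, e) {q : HeightOneSpectrum (𝓞 K) × ℕ | q.1.asIdeal ^ (q.2 + 1) ∣ a} := by
      ext ⟨q, m⟩
      simp only [Set.mem_setOf_eq, Set.mem_insert_iff, Prod.mk.injEq]
      by_cases hq : q = P
      · subst hq
        simp only [true_and]
        show p ^ (m+1) ∣ p * a ↔ m = e ∨ p ^ (m+1) ∣ a
        rw [pow_succ', mul_dvd_mul_iff_left hp.ne_zero, hpow, ← pow_succ', hpow]
        omega
      · simp only [hq, false_and, false_or]
        constructor
        · intro h
          have hqp : ¬ p ∣ q.asIdeal ^ (m+1) := by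
            intro h1
            have h2 := hp.dvd_of_dvd_pow h1
            apply hq
            apply HeightOneSpectrum.ext
            show q.asIdeal = p
            exact q.isMaximal.eq_of_le hpp.ne_top (Ideal.dvd_iff_le.mp h2)
          have : IsCoprime (q.asIdeal ^ (m+1)) p := by
            rw [Ideal.isCoprime_iff_sup_eq]
            have hpm : p.IsMaximal := hpp.isMaximal hp0
            have h3 : p < q.asIdeal ^ (m+1) ⊔ p := by
              refine lt_of_le_of_ne le_sup_right fun h4 => hqp ?_
              rw [Ideal.dvd_iff_le, h4]
              exact le_sup_left
            exact hpm.1.2 _ h3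
          exact this.dvd_of_dvd_mul_left h
        · exact fun h => h.trans (dvd_mul_left _ _)
    rw [hset]
    refine ⟨hf.insert _, ?_⟩
    rw [finsum_mem_insert _ _ hf, hs, _root_.map_mul, Nat.cast_mul, Real.log_mul]
    · simpa [Ideal.absNorm_eq_zero_iff] using hp0
    · simpa [Ideal.absNorm_eq_zero_iff] using ha
    · simp only [Set.mem_setOf_eq]
      show ¬ p ^ (e+1) ∣ a
      rw [hpow]; omega

/-- prime powers as ideals -/
noncomputable def qI (q : HeightOneSpectrum (𝓞 K) × ℕ) : (Ideal (𝓞 K))⁰ :=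
  ⟨q.1.asIdeal ^ (q.2 + 1), mem_nonZeroDivisors_of_ne_zero (pow_ne_zero _ q.1.ne_bot)⟩

/-- norm of a prime -/
noncomputable def nP (p : HeightOneSpectrum (𝓞 K)) : ℝ := (Ideal.absNorm p.asIdeal : ℝ)

theorem nI_qI (q : HeightOneSpectrum (𝓞 K) × ℕ) : nI K (qI K q) = nP K q.1 ^ (q.2 + 1) := by
  unfold nI qI nP
  simp

theorem two_le_nP (p : HeightOneSpectrum (𝓞 K)) : 2 ≤ nP K p := by
  unfold nP
  have h1 : Ideal.absNorm p.asIdeal ≠ 0 := by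
    rw [Ne, Ideal.absNorm_eq_zero_iff]; exact p.ne_bot
  have h2 : Ideal.absNorm p.asIdeal ≠ 1 := by
    rw [Ne, Ideal.absNorm_eq_one_iff]; exact p.isPrime.ne_top
  have : 2 ≤ Ideal.absNorm p.asIdeal := by omega
  exact_mod_cast this

theorem qI_inj : Function.Injective (qI K) := by
  rintro ⟨p, m⟩ ⟨q, n⟩ h
  have h1 : p.asIdeal ^ (m+1) = q.asIdeal ^ (n+1) := congrArg Subtype.val h
  have h2 : p = q := by
    have : p.asIdeal ∣ q.asIdeal := p.prime.dvd_of_dvd_pow (h1 ▸ dvd_pow_self _ (Nat.succ_ne_zero _))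
    apply HeightOneSpectrum.ext
    exact (q.isMaximal.eq_of_le p.isPrime.ne_top (Ideal.dvd_iff_le.mp this)).symm
  subst h2
  have h3 := nI_qI K (p, m)
  rw [h, nI_qI] at h3
  have := two_le_nP K p
  have h4 := pow_right_injective₀ (by linarith : 0 < nP K p) (by linarith) h3
  simp at h4
  simp [h4]

theorem cp_mul {a b : ℝ} (ha : 0 < a) (hb : 0 < b) (s : ℂ) : cp (a * b) s = cp a s * cp b s := by
  unfold cp
  rw [Real.log_mul ha.ne' hb.ne', ← Complex.exp_add]
  congr 1
  push_cast; ring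

theorem log_summable {s : ℂ} (hs : 1 < s.re) :
    Summable fun I : (Ideal (𝓞 K))⁰ => ‖(Real.log (nI K I) : ℂ) * cp (nI K I) s‖ := by
  set ε := (s.re - 1) / 2 with hε
  have ε0 : 0 < ε := by rw [hε]; linarith
  have h := ((zeta_data K).1 ((s.re - ε : ℝ) : ℂ) (by simp; rw [hε]; linarith)).mul_left (1/ε)
  refine Summable.of_nonneg_of_le (fun _ => norm_nonneg _) (fun I => ?_) h
  have l0 : 0 ≤ Real.log (nI K I) := Real.log_nonneg (one_le_nI K I)
  set l := Real.log (nI K I) with hl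
  rw [norm_mul, norm_cp, norm_cp, Complex.norm_real, Real.norm_eq_abs, abs_of_nonneg l0, ← hl,
    Complex.ofReal_re]
  have e : Real.exp (-(s.re - ε) * l) = Real.exp (ε * l) * Real.exp (-s.re * l) := by
    rw [← Real.exp_add]; congr 1; ring
  rw [e, ← mul_assoc]
  gcongr
  have := Real.add_one_le_exp (ε * l)
  calc l = 1 / ε * (ε * l) := by field_simp
    _ ≤ _ := by gcongr; linarith

/-- summand of `minus log derivative of zeta` -/
noncomputable def lt (s : ℂ) (q : HeightOneSpectrum (𝓞 K) × ℕ) : ℂ :=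
  (Real.log (nP K q.1) : ℂ) * cp (nI K (qI K q)) s

theorem lt_summable {s : ℂ} (hs : 1 < s.re) : Summable fun q => ‖lt K s q‖ := by
  refine Summable.of_nonneg_of_le (fun _ => norm_nonneg _) (fun q => ?_)
    ((log_summable K hs).comp_injective (qI_inj K))
  unfold lt
  simp only [Function.comp, norm_mul]
  gcongr
  have h2 := two_le_nP K q.1
  rw [Complex.norm_real, Complex.norm_real, Real.norm_eq_abs, Real.norm_eq_abs,
    abs_of_nonneg (Real.log_nonneg (by linarith)), abs_of_nonneg (Real.log_nonneg (one_le_nI K _)),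
    nI_qI]
  apply Real.log_le_log (by linarith)
  exact le_self_pow₀ (by linarith) (by omega)

theorem log_deriv_identity {s : ℂ} (hs : 1 < s.re) :
    ∑' I : (Ideal (𝓞 K))⁰, (Real.log (nI K I) : ℂ) * cp (nI K I) s = Z K s * ∑' q, lt K s q := by
  unfold Z
  have h1 := (zeta_data K).1 s hs
  rw [tsum_mul_tsum_of_summable_norm h1 (lt_summable K hs)]
  have h2 := summable_mul_of_summable_norm h1 (lt_summable K hs)
  have h3 := h2.hasSum.tsum_fiberwise
    (fun z : (Ideal (𝓞 K))⁰ × (HeightOneSpectrum (𝓞 K) × ℕ) => z.1 * qI K z.2)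
  rw [← h3.tsum_eq]
  refine tsum_congr fun I => ?_
  have hI0 : (I : Ideal (𝓞 K)) ≠ 0 := nonZeroDivisors.coe_ne_zero I
  obtain ⟨hf, hsum⟩ := fiber_sum K I hI0
  set S := {q : HeightOneSpectrum (𝓞 K) × ℕ | q.1.asIdeal ^ (q.2 + 1) ∣ (I : Ideal (𝓞 K))}
  set g := fun z : (Ideal (𝓞 K))⁰ × (HeightOneSpectrum (𝓞 K) × ℕ) => z.1 * qI K z.2 with hg
  have e1 : ∀ b : g ⁻¹' {I}, cp (nI K b.1.1) s * lt K s b.1.2 =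
      (Real.log (nP K b.1.2.1) : ℂ) * cp (nI K I) s := by
    rintro ⟨⟨J, q⟩, hb⟩
    have hb : J * qI K q = I := hb
    subst hb
    unfold lt
    rw [nI_mul, cp_mul (by linarith [one_le_nI K J]) (by linarith [one_le_nI K (qI K q)])]
    ring
  simp_rw [e1]
  rw [tsum_mul_right]
  congr 1
  let f : g ⁻¹' {I} → S := fun b => ⟨b.1.2, by
    obtain ⟨⟨J, q⟩, hb⟩ := b
    have hb : J * qI K q = I := hb
    subst hb
    show q.1.asIdeal ^ (q.2+1) ∣ (J : Ideal (𝓞 K)) * q.1.asIdeal ^ (q.2+1)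
    exact dvd_mul_left _ _⟩
  have hfb : Function.Bijective f := by
    constructor
    · rintro ⟨⟨J, q⟩, hb⟩ ⟨⟨J', q'⟩, hb'⟩ h
      have hq : q = q' := congrArg Subtype.val h
      subst hq
      have hb : J * qI K q = I := hb
      have hb' : J' * qI K q = I := hb'
      have hv : (J : Ideal (𝓞 K)) * (qI K q : Ideal (𝓞 K)) = J' * (qI K q : Ideal (𝓞 K)) :=
        congrArg Subtype.val (hb.trans hb'.symm)
      have : J = J' := Subtype.ext (mul_right_cancel₀ (nonZeroDivisors.coe_ne_zero (qI K q)) hv)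
      subst this
      rfl
    · rintro ⟨q, hq⟩
      obtain ⟨J, hJ⟩ := hq
      have hJ0 : J ≠ 0 := by
        rintro rfl
        exact hI0 (by rw [hJ, mul_zero])
      refine ⟨⟨⟨⟨J, mem_nonZeroDivisors_of_ne_zero hJ0⟩, q⟩, ?_⟩, rfl⟩
      show _ * _ = I
      apply Subtype.ext
      show J * q.1.asIdeal ^ (q.2+1) = I
      rw [hJ, mul_comm]
  have e2 : ∑' b : g ⁻¹' {I}, (Real.log (nP K b.1.2.1) : ℂ) = ∑' q : S, (Real.log (nP K q.1.1) : ℂ) :=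
    (Equiv.ofBijective f hfb).tsum_eq (fun q : S => (Real.log (nP K q.1.1) : ℂ))
  rw [e2, ← Complex.ofReal_tsum]
  congr 1
  have := hf.to_subtype
  rw [tsum_eq_finsum (Set.toFinite _), finsum_set_coe_eq_finsum_mem S (f := fun q => Real.log (nP K q.1))]
  exact hsum.symm

end PIT

end


section
namespace PIT
open Filter Topology MeasureTheory NumberField IsDedekindDomain
open scoped nonZeroDivisors

theorem order_lim {f : ℂ → ℂ} {s : ℂ} (hf : AnalyticAt ℂ f s) (h0 : ¬ ∀ᶠ z in 𝓝 s, f z = 0) :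
    ∃ n : ℕ, Tendsto (fun z => (z - s) * (deriv f z / f z)) (𝓝[≠] s) (𝓝 (n : ℂ)) ∧
      (f s = 0 → 1 ≤ n) ∧ (f s ≠ 0 → n = 0) := by
  obtain ⟨n, g, hg, hg0, he⟩ := hf.exists_eventuallyEq_pow_smul_nonzero_iff.mpr h0
  refine ⟨n, ?_, ?_, ?_⟩
  · have h1 : Tendsto (fun z => (n : ℂ) + (z - s) * (deriv g z / g z)) (𝓝[≠] s)
        (𝓝 ((n : ℂ) + (s - s) * (deriv g s / g s))) := by
      apply Tendsto.mono_left _ nhdsWithin_le_nhds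
      have c1 : ContinuousAt (deriv g) s := hg.deriv.continuousAt
      have c2 : ContinuousAt g s := hg.continuousAt
      have : ContinuousAt (fun z => (n : ℂ) + (z - s) * (deriv g z / g z)) s := by fun_prop (disch := assumption)
      exact this
    rw [sub_self, zero_mul, add_zero] at h1
    refine h1.congr' ?_
    have e1 : ∀ᶠ z in 𝓝 s, ∀ᶠ w in 𝓝 z, f w = (w - s) ^ n • g w := he.eventually_nhds
    have e2 : ∀ᶠ z in 𝓝 s, g z ≠ 0 := hg.continuousAt.eventually_ne hg0
    have e3 : ∀ᶠ z in 𝓝 s, AnalyticAt ℂ g z := hg.eventually_analyticAt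
    filter_upwards [nhdsWithin_le_nhds e1, nhdsWithin_le_nhds e2, nhdsWithin_le_nhds e3,
      self_mem_nhdsWithin] with z h1 h2 h3 h4
    have h4 : z - s ≠ 0 := sub_ne_zero.mpr h4
    have d : HasDerivAt (fun w => (w - s) ^ n • g w)
        ((n * (z - s) ^ (n - 1)) * g z + (z - s) ^ n * deriv g z) z := by
      have := (((hasDerivAt_id z).sub_const s).pow n).mul h3.differentiableAt.hasDerivAt
      exact this.congr_deriv (by simp)
    have hd : deriv f z = (n * (z - s) ^ (n - 1)) * g z + (z - s) ^ n * deriv g z := by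
      rw [Filter.EventuallyEq.deriv_eq h1]; exact d.deriv
    rw [hd, h1.self_of_nhds, smul_eq_mul]
    rcases n with _ | m
    · simp
    · simp only [Nat.add_sub_cancel]
      field_simp
      ring
  · intro h
    by_contra hn
    have : n = 0 := by omega
    subst this
    have := he.self_of_nhds
    rw [h] at this
    simp at this
    exact hg0 this.symm
  · intro h
    by_contra hn
    apply h
    rw [he.self_of_nhds, sub_self, zero_pow hn, zero_smul]

variable (K : Type*) [Field K] [NumberField K]

/-- `minus log derivative of zeta` -/
noncomputable def Lam (s : ℂ) : ℂ := ∑' q, lt K s q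

theorem norm_lt (s : ℂ) (q) : ‖lt K s q‖ = Real.log (nP K q.1) * Real.exp (-s.re * Real.log (nI K (qI K q))) := by
  unfold lt
  rw [norm_mul, norm_cp, Complex.norm_real, Real.norm_eq_abs,
    abs_of_nonneg (Real.log_nonneg (by linarith [two_le_nP K q.1]))]

theorem norm_Lam_le {σ : ℝ} (hσ : 1 < σ) {s : ℂ} (hs : σ ≤ s.re) : ‖Lam K s‖ ≤ ∑' q, ‖lt K σ q‖ := by
  refine tsum_of_norm_bounded (lt_summable K (s := σ) (by simpa using hσ)).hasSum fun q => ?_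
  rw [norm_lt, norm_lt]
  have := Real.log_nonneg (one_le_nI K (qI K q))
  have := Real.log_nonneg (by linarith [two_le_nP K q.1] : 1 ≤ nP K q.1)
  have : -s.re ≤ -((σ:ℂ)).re := by simpa using hs
  gcongr

theorem Z_deriv {s : ℂ} (hs : 1 < s.re) : deriv (Z K) s = - (Z K s * Lam K s) := by
  obtain ⟨σ, h1, h2⟩ := exists_between hs
  have hd : ∀ (n : ℝ) (z : ℂ), HasDerivAt (cp n) (-((Real.log n : ℂ) * cp n z)) z := by
    intro n z
    have h1 : HasDerivAt (fun z : ℂ => -z * (Real.log n : ℝ)) (-(Real.log n : ℝ) : ℂ) z := by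
      simpa using ((hasDerivAt_id z).neg.mul_const ((Real.log n : ℝ) : ℂ))
    have := h1.cexp
    unfold cp
    exact this.congr_deriv (by ring)
  have := Complex.hasSum_deriv_of_summable_norm (U := {z : ℂ | σ < z.re}) (z := s)
    (F := fun (I : (Ideal (𝓞 K))⁰) z => cp (nI K I) z)
    ((zeta_data K).1 (σ : ℂ) (by simpa using h1))
    (fun I z _ => (hd _ z).differentiableAt.differentiableWithinAt)
    (isOpen_lt continuous_const Complex.continuous_re) (fun I z hz => by
      rw [norm_cp, norm_cp]
      have := Real.log_nonneg (one_le_nI K I)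
      have : -z.re ≤ -((σ:ℂ)).re := by simpa using (show σ < z.re from hz).le
      gcongr) h2
  unfold Lam
  rw [← log_deriv_identity K hs, ← tsum_neg]
  show deriv (fun s => ∑' I : (Ideal (𝓞 K))⁰, cp (nI K I) s) s = _
  rw [← this.tsum_eq]
  refine tsum_congr fun I => ?_
  exact (hd _ s).deriv

theorem mertens (σ t : ℝ) (hσ : 1 < σ) :
    0 ≤ 3 * (Lam K σ).re + 4 * (Lam K (σ + t * Complex.I)).re + (Lam K (σ + (2 * t : ℝ) * Complex.I)).re := by
  have hs : ∀ t : ℝ, 1 < ((σ : ℂ) + t * Complex.I).re := by intro t; simpa using hσ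
  have hS : ∀ t : ℝ, Summable (lt K ((σ : ℂ) + t * Complex.I)) := fun t => (lt_summable K (hs t)).of_norm
  have h0 := hS 0
  simp only [Complex.ofReal_zero, zero_mul, add_zero] at h0
  have e : ∀ (t : ℝ) q, (lt K ((σ : ℂ) + t * Complex.I) q).re =
      Real.log (nP K q.1) * (Real.exp (-σ * Real.log (nI K (qI K q))) *
        Real.cos (t * Real.log (nI K (qI K q)))) := by
    intro t q
    unfold lt cp
    rw [Complex.re_ofReal_mul, Complex.exp_re]
    congr 2
    · simp
    · rw [← Real.cos_neg]; simp
  have e0 : ∀ q, (lt K (σ : ℂ) q).re =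
      Real.log (nP K q.1) * (Real.exp (-σ * Real.log (nI K (qI K q))) * 1) := by
    intro q
    have := e 0 q
    simpa using this
  unfold Lam
  rw [Complex.re_tsum h0, Complex.re_tsum (hS t), Complex.re_tsum (hS (2*t)), ← tsum_mul_left, ← tsum_mul_left,
    ← Summable.tsum_add, ← Summable.tsum_add]
  · refine tsum_nonneg fun q => ?_
    rw [e0, e, e]
    set x := t * Real.log (nI K (qI K q)) with hx
    have hx2 : 2 * t * Real.log (nI K (qI K q)) = 2 * x := by rw [hx]; ring
    rw [hx2, Real.cos_two_mul]
    have h1 := Real.log_nonneg (by linarith [two_le_nP K q.1] : 1 ≤ nP K q.1)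
    have h2 := (Real.exp_pos (-σ * Real.log (nI K (qI K q)))).le
    have : 0 ≤ 2 * (Real.log (nP K q.1) * Real.exp (-σ * Real.log (nI K (qI K q)))) * (1 + Real.cos x)^2 := by
      positivity
    nlinarith [this]
  · exact ((Complex.hasSum_re h0.hasSum).summable.mul_left 3).add ((Complex.hasSum_re (hS t).hasSum).summable.mul_left 4)
  · exact (Complex.hasSum_re (hS (2*t)).hasSum).summable
  · exact ((Complex.hasSum_re h0.hasSum).summable.mul_left 3)
  · exact ((Complex.hasSum_re (hS t).hasSum).summable.mul_left 4)

theorem Y_data : ∃ Y : ℂ → ℂ, (∀ s : ℂ, 1 ≤ s.re → AnalyticAt ℂ Y s) ∧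
    (∀ s : ℂ, 1 ≤ s.re → Y s ≠ 0) ∧
    ∀ s : ℂ, 1 < s.re → Lam K s = 1 / (s - 1) - deriv Y s / Y s := by
  obtain ⟨-, θ, hθ, Y, hY, hY1, hYZ⟩ := zeta_data K
  have hU : IsOpen {s : ℂ | θ < s.re} := isOpen_lt continuous_const Complex.continuous_re
  have hanU : AnalyticOnNhd ℂ Y {s : ℂ | θ < s.re} :=
    DifferentiableOn.analyticOnNhd (fun s hs => (hY s hs).differentiableWithinAt) hU
  have hmem : ∀ s : ℂ, 1 ≤ s.re → s ∈ {s : ℂ | θ < s.re} := fun s hs => by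
    show θ < s.re
    linarith
  have han : ∀ s : ℂ, 1 ≤ s.re → AnalyticAt ℂ Y s := fun s hs => hanU s (hmem s hs)
  have hnl : ∀ s : ℂ, 1 ≤ s.re → ¬ ∀ᶠ z in 𝓝 s, Y z = 0 := by
    intro s hs h
    have hc : IsPreconnected {s : ℂ | θ < s.re} := (convex_halfSpace_re_gt θ).isPreconnected
    exact hY1 (hanU.eqOn_zero_of_preconnected_of_eventuallyEq_zero hc (hmem s hs) h (hmem 1 (by simp)))
  have s1 : ∀ s : ℂ, 1 < s.re → s - 1 ≠ 0 := fun s hs h => by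
    have := congrArg Complex.re h; simp at this; linarith
  have hdiv : ∀ s : ℂ, 1 < s.re → Y s ≠ 0 → Lam K s = 1 / (s - 1) - deriv Y s / Y s := by
    intro s hs hs0
    have hopen : {s : ℂ | 1 < s.re} ∈ 𝓝 s := (isOpen_lt continuous_const Complex.continuous_re).mem_nhds hs
    have e : Z K =ᶠ[𝓝 s] fun z => Y z / (z - 1) := by
      filter_upwards [hopen] with z hz
      rw [← hYZ z hz, mul_div_cancel_left₀ _ (s1 z hz)]
    have h1 := e.deriv_eq
    rw [Z_deriv K hs] at h1
    have h2 : HasDerivAt (fun z => Y z / (z - 1)) ((deriv Y s * (s - 1) - Y s * 1) / (s-1)^2) s :=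
      (han s hs.le).differentiableAt.hasDerivAt.div ((hasDerivAt_id s).sub_const 1) (s1 s hs)
    rw [h2.deriv, e.self_of_nhds] at h1
    have := s1 s hs
    field_simp at h1 ⊢
    linear_combination -h1
  -- the order at each point
  have hlim : ∀ s : ℂ, 1 ≤ s.re → ∃ n : ℕ, Tendsto (fun ε : ℝ => (ε : ℂ) * (1 / (s + ε - 1) - Lam K (s + ε)))
      (𝓝[>] 0) (𝓝 n) ∧ (Y s = 0 → 1 ≤ n) ∧ (Y s ≠ 0 → n = 0) := by
    intro s hs
    obtain ⟨n, hn, hn1, hn2⟩ := order_lim (han s hs) (hnl s hs)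
    refine ⟨n, ?_, hn1, hn2⟩
    have hm : Tendsto (fun ε : ℝ => s + ε) (𝓝[>] 0) (𝓝[≠] s) := by
      apply tendsto_nhdsWithin_of_tendsto_nhds_of_eventually_within
      · have : ContinuousAt (fun ε : ℝ => s + ε) 0 := by fun_prop
        have h := this.tendsto
        simp only [Complex.ofReal_zero, add_zero] at h
        exact h.mono_left nhdsWithin_le_nhds
      · filter_upwards [self_mem_nhdsWithin] with ε hε
        simpa using (show (0:ℝ) < ε from hε).ne'
    refine (hn.comp hm).congr' ?_
    have hne : ∀ᶠ z in 𝓝[≠] s, Y z ≠ 0 :=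
      (han s hs).eventually_eq_zero_or_eventually_ne_zero.resolve_left (hnl s hs)
    filter_upwards [hm.eventually hne, self_mem_nhdsWithin] with ε h1 h2
    have h2 : 0 < ε := h2
    simp only [Function.comp]
    rw [hdiv (s + ε) (by simp; linarith) h1]
    congr 1 <;> ring
  have hfirst : ∀ s : ℂ, s ≠ 1 → Tendsto (fun ε : ℝ => (ε : ℂ) * (1 / (s + ε - 1))) (𝓝[>] 0) (𝓝 0) := by
    intro s hs
    have hs : s + ((0:ℝ):ℂ) - 1 ≠ 0 := by simpa [sub_eq_zero] using hs
    have : ContinuousAt (fun ε : ℝ => (ε : ℂ) * (1 / (s + ε - 1))) 0 := by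
      fun_prop (disch := assumption)
    have h := this.tendsto
    simp only [Complex.ofReal_zero, zero_mul] at h
    exact h.mono_left nhdsWithin_le_nhds
  have hgt : ∀ s : ℂ, 1 < s.re → Y s ≠ 0 := by
    intro s hs h0
    obtain ⟨n, hn, hn1, -⟩ := hlim s hs.le
    have hs1 : s ≠ 1 := fun h => by rw [h] at hs; simp at hs
    have h2 : Tendsto (fun ε : ℝ => (ε : ℂ) * Lam K (s + ε)) (𝓝[>] 0) (𝓝 0) := by
      have hz : Tendsto (fun ε : ℝ => ε * ∑' q, ‖lt K (s.re : ℂ) q‖) (𝓝[>] 0) (𝓝 0) := by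
        have : ContinuousAt (fun ε : ℝ => ε * ∑' q, ‖lt K (s.re : ℂ) q‖) 0 := by fun_prop
        have h := this.tendsto
        simp only [zero_mul] at h
        exact h.mono_left nhdsWithin_le_nhds
      refine squeeze_zero_norm' ?_ hz
      filter_upwards [self_mem_nhdsWithin] with ε hε
      have hε : 0 < ε := hε
      rw [norm_mul, Complex.norm_real, Real.norm_eq_abs, abs_of_pos hε]
      gcongr
      exact norm_Lam_le K hs (by simp; linarith)
    have h3 := (hfirst s hs1).sub h2
    have h4 : Tendsto (fun ε : ℝ => (ε : ℂ) * (1 / (s + ε - 1) - Lam K (s + ε))) (𝓝[>] 0) (𝓝 (0 - 0)) :=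
      h3.congr fun ε => by ring
    have := tendsto_nhds_unique hn h4
    have h1 := hn1 h0
    simp at this
    omega
  have hline : ∀ t : ℝ, t ≠ 0 → ∃ n : ℕ, Tendsto (fun ε : ℝ => ε * (Lam K ((1 + ε : ℝ) + t * Complex.I)).re)
      (𝓝[>] 0) (𝓝 (-n)) ∧ (Y (1 + t * Complex.I) = 0 → 1 ≤ n) := by
    intro t ht
    obtain ⟨n, hn, hn1, -⟩ := hlim (1 + t * Complex.I) (by simp)
    refine ⟨n, ?_, hn1⟩
    have hs1 : (1 : ℂ) + t * Complex.I ≠ 1 := by simp [ht]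
    have h3 := (hfirst _ hs1).sub hn
    have h4 := (Complex.continuous_re.tendsto _).comp h3
    simp only [zero_sub, Complex.neg_re, Complex.natCast_re] at h4
    refine h4.congr fun ε => ?_
    simp only [Function.comp]
    rw [← mul_sub, sub_sub_cancel, Complex.re_ofReal_mul]
    congr 3
    push_cast; ring
  have hone : Tendsto (fun ε : ℝ => ε * (Lam K ((1 + ε : ℝ) : ℂ)).re) (𝓝[>] 0) (𝓝 1) := by
    obtain ⟨n, hn, -, hn1⟩ := hlim 1 (by simp)
    have := hn1 hY1
    subst this
    have h4 := (Complex.continuous_re.tendsto _).comp (hn.const_sub 1)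
    simp only [Nat.cast_zero, sub_zero, Complex.one_re] at h4
    refine h4.congr' ?_
    filter_upwards [self_mem_nhdsWithin] with ε hε
    have hε : (ε : ℂ) ≠ 0 := by exact_mod_cast (show (0:ℝ) < ε from hε).ne'
    simp only [Function.comp]
    rw [add_sub_cancel_left, mul_sub, mul_one_div_cancel hε, sub_sub_cancel, Complex.re_ofReal_mul]
    congr 3
    push_cast; ring
  have hnz : ∀ s : ℂ, 1 ≤ s.re → Y s ≠ 0 := by
    intro s hs
    rcases hs.lt_or_eq with hs | hs
    · exact hgt s hs
    · have hst : s = 1 + s.im * Complex.I := by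
        apply Complex.ext <;> simp [← hs]
      rw [hst]
      set t := s.im
      by_cases ht : t = 0
      · rw [ht]; simpa using hY1
      · intro h0
        obtain ⟨n, hn, hn1⟩ := hline t ht
        obtain ⟨m, hm, -⟩ := hline (2 * t) (by simpa using ht)
        have h1 := hn1 h0
        have h2 := ((hone.const_mul 3).add (hn.const_mul 4)).add hm
        have h3 : (0:ℝ) ≤ 3 * 1 + 4 * (-n) + -m := by
          refine ge_of_tendsto h2 ?_
          filter_upwards [self_mem_nhdsWithin] with ε hε
          have hε : 0 < ε := hε
          have := mul_nonneg hε.le (mertens K (1 + ε) t (by linarith))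
          calc _ ≤ _ := this
            _ = _ := by ring
        have h1 : (1:ℝ) ≤ n := by exact_mod_cast h1
        have : (0:ℝ) ≤ m := Nat.cast_nonneg m
        linarith
  exact ⟨Y, han, hnz, fun s hs => hdiv s hs (hnz s hs.le)⟩

end PIT

end


section
namespace PIT
open Filter Topology MeasureTheory NumberField IsDedekindDomain
open scoped nonZeroDivisors

variable (K : Type*) [Field K] [NumberField K]

theorem nP_fin (x : ℝ) : {p : HeightOneSpectrum (𝓞 K) | nP K p ≤ x}.Finite := by
  have hinj : Function.Injective fun p : HeightOneSpectrum (𝓞 K) => qI K (p, 0) := fun p q h => by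
    simpa using qI_inj K h
  refine ((nI_fin K x).preimage hinj.injOn).subset fun p hp => ?_
  show nI K (qI K (p, 0)) ≤ x
  rw [nI_qI]
  simpa using hp

/-- Chebyshev function of a number field -/
noncomputable def Th (x : ℝ) : ℝ := ∑ p ∈ (nP_fin K x).toFinset, Real.log (nP K p)

theorem log_nP_pos (p : HeightOneSpectrum (𝓞 K)) : 0 < Real.log (nP K p) :=
  Real.log_pos (by linarith [two_le_nP K p])

theorem Th_mono : Monotone (Th K) := by
  intro x y h
  refine Finset.sum_le_sum_of_subset_of_nonneg ?_ fun p _ _ => (log_nP_pos K p).le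
  intro p hp
  simp only [Set.Finite.mem_toFinset, Set.mem_ofPred_eq] at hp ⊢
  linarith

theorem Th_nonneg (x : ℝ) : 0 ≤ Th K x := Finset.sum_nonneg fun p _ => (log_nP_pos K p).le

theorem exists_prime_mem (P : Ideal (𝓞 K)) [hP : P.IsPrime] (m : ℕ) : m ≠ 0 → (m : 𝓞 K) ∈ P →
    ∃ l : ℕ, l.Prime ∧ l ∣ m ∧ (l : 𝓞 K) ∈ P := by
  induction m using induction_on_primes with
  | zero => exact fun h => absurd rfl h
  | one =>
    intro _ h
    exact absurd ((Ideal.eq_top_iff_one P).mpr (by simpa using h)) hP.ne_top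
  | prime_mul p a hp ih =>
    intro h0 h
    rw [Nat.cast_mul] at h
    rcases hP.mem_or_mem h with h | h
    · exact ⟨p, hp, dvd_mul_right _ _, h⟩
    · obtain ⟨l, h1, h2, h3⟩ := ih (by rintro rfl; simp at h0) h
      exact ⟨l, h1, h2.mul_left _, h3⟩

theorem Th_le : ∃ B, ∀ x, 1 ≤ x → |Th K x| ≤ B * x := by
  refine ⟨Module.finrank ℚ K * Real.log 4, fun x hx => ?_⟩
  rw [abs_of_nonneg (Th_nonneg K x)]
  classical
  set S := (nP_fin K x).toFinset
  set n := ⌊x⌋₊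
  have h1 : ∏ p ∈ S, p.asIdeal ∣ Ideal.span {((primorial n : ℕ) : 𝓞 K)} := by
    have hinj : Set.InjOn (fun p : HeightOneSpectrum (𝓞 K) => p.asIdeal) (S : Set (HeightOneSpectrum (𝓞 K))) :=
      fun p _ q _ h => HeightOneSpectrum.ext h
    have h := Finset.prod_image (s := S) (g := fun p : HeightOneSpectrum (𝓞 K) => p.asIdeal)
      (f := fun I => I) hinj
    rw [← h]
    apply Finset.prod_primes_dvd
    · intro a ha
      obtain ⟨p, _, rfl⟩ := Finset.mem_image.mp ha
      exact p.prime
    · intro a ha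
      obtain ⟨p, hp, rfl⟩ := Finset.mem_image.mp ha
      rw [Ideal.dvd_span_singleton]
      have hp : nP K p ≤ x := by simpa [S] using hp
      have h0 : Ideal.absNorm p.asIdeal ≠ 0 := by
        rw [Ne, Ideal.absNorm_eq_zero_iff]; exact p.ne_bot
      have := p.isPrime
      obtain ⟨l, l1, l2, l3⟩ := exists_prime_mem K p.asIdeal _ h0 (Ideal.absNorm_mem p.asIdeal)
      have l4 : l ≤ n := (Nat.le_of_dvd (Nat.pos_of_ne_zero h0) l2).trans (Nat.le_floor hp)
      obtain ⟨r, hr⟩ := l1.dvd_primorial_iff.mpr l4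
      rw [hr, Nat.cast_mul]
      exact Ideal.mul_mem_right _ _ l3
  have h2 := map_dvd Ideal.absNorm h1
  rw [map_prod, Ideal.absNorm_span_natCast, RingOfIntegers.rank] at h2
  have h3 := Nat.le_of_dvd (pow_pos (primorial_pos n) _) h2
  have h4 : ∏ p ∈ S, nP K p ≤ (primorial n : ℝ) ^ Module.finrank ℚ K := by
    unfold nP; exact_mod_cast h3
  have h5 : Th K x = Real.log (∏ p ∈ S, nP K p) := by
    rw [Real.log_prod]
    · rfl
    · intro p _
      linarith [two_le_nP K p]
  rw [h5]
  have h6 : 0 < ∏ p ∈ S, nP K p := Finset.prod_pos fun p _ => by linarith [two_le_nP K p]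
  refine (Real.log_le_log h6 h4).trans ?_
  rw [Real.log_pow, mul_assoc]
  gcongr
  have h7 : (primorial n : ℝ) ≤ 4 ^ n := by exact_mod_cast primorial_le_four_pow n
  have h8 : (0:ℝ) < primorial n := by exact_mod_cast primorial_pos n
  refine (Real.log_le_log h8 h7).trans ?_
  rw [Real.log_pow, mul_comm]
  gcongr
  exact Nat.floor_le (by linarith)

/-- prime zeta derivative -/
noncomputable def PP (s : ℂ) : ℂ := ∑' p : HeightOneSpectrum (𝓞 K), lt K s (p, 0)

/-- higher prime powers -/
noncomputable def RR (s : ℂ) : ℂ := ∑' q : HeightOneSpectrum (𝓞 K) × ℕ, lt K s (q.1, q.2 + 1)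

theorem Lam_split {s : ℂ} (hs : 1 < s.re) : Lam K s = PP K s + RR K s := by
  have h := (lt_summable K hs).of_norm
  have i1 : Function.Injective fun p : HeightOneSpectrum (𝓞 K) => (p, (0:ℕ)) := fun p q h => by simpa using h
  have i2 : Function.Injective fun q : HeightOneSpectrum (𝓞 K) × ℕ => (q.1, q.2 + 1) := fun p q h => by
    simp only [Prod.mk.injEq, add_left_inj] at h
    exact Prod.ext h.1 h.2
  have h1 := h.comp_injective i1
  have h2 := h.comp_injective i2
  unfold Lam PP RR
  rw [h.tsum_prod, Summable.tsum_prod (f := fun q : HeightOneSpectrum (𝓞 K) × ℕ => lt K s (q.1, q.2 + 1)) h2]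
  refine Eq.trans ?_ (Summable.tsum_add h1 h2.prod)
  refine tsum_congr fun p => ?_
  exact (h.prod_factor p).tsum_eq_zero_add

theorem RR_cont : ContinuousOn (RR K) {s : ℂ | 1 ≤ s.re} := by
  have s1 : Summable fun p : HeightOneSpectrum (𝓞 K) => ‖lt K ((3/2 : ℝ) : ℂ) (p, 0)‖ := by
    have i1 : Function.Injective fun p : HeightOneSpectrum (𝓞 K) => (p, (0:ℕ)) := fun p q h => by simpa using h
    exact (lt_summable K (s := ((3/2 : ℝ) : ℂ)) (by rw [Complex.ofReal_re]; norm_num)).comp_injective i1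
  have s2 := s1.mul_of_nonneg (summable_geometric_two) (fun _ => norm_nonneg _) (fun _ => by positivity)
  refine continuousOn_tsum (fun q => ?_) s2 fun q s hs => ?_
  · unfold lt cp
    fun_prop
  · have hs : 1 ≤ s.re := hs
    rw [norm_lt, norm_lt, nI_qI, nI_qI, Complex.ofReal_re]
    have hl := log_nP_pos K q.1
    have h2 := two_le_nP K q.1
    simp only [zero_add, pow_one, Real.log_pow]
    set l := Real.log (nP K q.1) with hld
    rw [mul_assoc]
    gcongr
    have e1 : Real.exp (-(q.2:ℝ) * l) ≤ (1/2)^q.2 := by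
      have : Real.exp (-(q.2:ℝ) * l) = (1 / nP K q.1) ^ q.2 := by
        rw [neg_mul, Real.exp_neg, Real.exp_nat_mul, hld, Real.exp_log (by linarith), one_div, inv_pow]
      rw [this]
      gcongr
    refine le_trans ?_ (mul_le_mul_of_nonneg_left e1 (Real.exp_pos _).le)
    rw [← Real.exp_add]
    apply Real.exp_le_exp.mpr
    push_cast
    have : 0 ≤ (q.2 : ℝ) := Nat.cast_nonneg _
    have h3 : ((q.2:ℝ) + 1 + 1) * l ≤ s.re * (((q.2:ℝ) + 1 + 1) * l) := by
      apply le_mul_of_one_le_left (by positivity) hs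
    nlinarith

theorem PP_conv {s : ℂ} (hs : 1 < s.re) :
    ∫ u in Set.Ici (0:ℝ), (Th K (Real.exp u) : ℂ) * Complex.exp (-s * u) = PP K s * (1 / s) := by
  have i1 : Function.Injective fun p : HeightOneSpectrum (𝓞 K) => (p, (0:ℕ)) := fun p q h => by simpa using h
  have i2 : Function.Injective fun p : HeightOneSpectrum (𝓞 K) => qI K (p, 0) := fun p q h => by
    simpa using qI_inj K h
  have : Countable (HeightOneSpectrum (𝓞 K)) := i2.countable
  have h := conv_sum (fun p : HeightOneSpectrum (𝓞 K) => lt K s (p, 0))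
    ((lt_summable K hs).comp_injective i1) (ek s) (ek_int (by linarith)) (fun p => Real.log (nP K p))
  rw [ek_integral (by linarith)] at h
  unfold PP
  rw [← h, ← integral_indicator measurableSet_Ici]
  congr 1
  funext u
  have e : ∀ p : HeightOneSpectrum (𝓞 K), lt K s (p, 0) * ek s (u - Real.log (nP K p)) =
      if nP K p ≤ Real.exp u then (Real.log (nP K p) : ℂ) * Complex.exp (-s * u) else 0 := by
    intro p
    have h2 := two_le_nP K p
    have hiff : nP K p ≤ Real.exp u ↔ Real.log (nP K p) ≤ u := (Real.log_le_iff_le_exp (by linarith)).symm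
    unfold lt cp ek
    rw [nI_qI]
    simp only [zero_add, pow_one]
    by_cases hu : Real.log (nP K p) ≤ u
    · rw [if_pos (hiff.mpr hu), Set.indicator_of_mem (by simpa using hu), mul_assoc, ← Complex.exp_add]
      congr 2
      push_cast; ring
    · rw [if_neg (fun h => hu (hiff.mp h)), Set.indicator_of_notMem (by simpa using hu), mul_zero]
  simp_rw [e]
  have e2 : ∑' p : HeightOneSpectrum (𝓞 K), (if nP K p ≤ Real.exp u then
      (Real.log (nP K p) : ℂ) * Complex.exp (-s * u) else 0) =
      (Th K (Real.exp u) : ℂ) * Complex.exp (-s * u) := by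
    rw [tsum_eq_sum (s := (nP_fin K (Real.exp u)).toFinset)]
    · unfold Th
      rw [Complex.ofReal_sum, Finset.sum_mul]
      refine Finset.sum_congr rfl fun p hp => ?_
      rw [if_pos (by simpa using hp)]
    · intro p hp
      rw [if_neg (by simpa using hp)]
  rw [e2]
  by_cases hu : 0 ≤ u
  · rw [Set.indicator_of_mem (by exact hu)]
  · rw [Set.indicator_of_notMem (by exact hu)]
    have : Th K (Real.exp u) = 0 := by
      unfold Th
      apply Finset.sum_eq_zero
      intro p hp
      have hp : nP K p ≤ Real.exp u := by simpa using hp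
      have := Real.exp_le_one_iff.mpr (not_le.mp hu).le
      linarith [two_le_nP K p]
    rw [this]; simp

theorem Th_asymp : Tendsto (fun x => Th K x / x) atTop (𝓝 1) := by
  obtain ⟨Y, hY, hY0, hYL⟩ := Y_data K
  obtain ⟨B, hB⟩ := Th_le K
  refine tauber (Th_mono K) hB (fun z => (1 / (1 + z)) * (- (deriv Y (1 + z) / Y (1 + z)) - RR K (1 + z) - 1))
    ?_ ?_
  · have hm : Set.MapsTo (fun z : ℂ => 1 + z) {z : ℂ | 0 ≤ z.re} {s : ℂ | 1 ≤ s.re} := by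
      intro z hz
      have hz : 0 ≤ z.re := hz
      show 1 ≤ (1 + z).re
      simp only [Complex.add_re, Complex.one_re]; linarith
    have hc : ContinuousOn (fun z : ℂ => 1 + z) {z : ℂ | 0 ≤ z.re} := by fun_prop
    have c1 : ContinuousOn Y {s : ℂ | 1 ≤ s.re} := fun s hs => (hY s hs).continuousAt.continuousWithinAt
    have c2 : ContinuousOn (deriv Y) {s : ℂ | 1 ≤ s.re} :=
      fun s hs => (hY s hs).deriv.continuousAt.continuousWithinAt
    have c3 : ContinuousOn (fun s => (1 / s) * (-(deriv Y s / Y s) - RR K s - 1)) {s : ℂ | 1 ≤ s.re} := by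
      refine ContinuousOn.mul (continuousOn_const.div continuousOn_id fun s hs h => ?_)
        (((c2.div c1 fun s hs => hY0 s hs).neg.sub (RR_cont K)).sub continuousOn_const)
      have hs : 1 ≤ s.re := hs
      have h : s = 0 := h
      rw [h] at hs; simp at hs; linarith
    exact c3.comp hc hm
  · intro z hz
    have hs : 1 < (1 + z).re := by simp only [Complex.add_re, Complex.one_re]; linarith
    have n1 : 1 + z ≠ 0 := fun h => by rw [h] at hs; simp at hs; linarith
    have n2 : z ≠ 0 := fun h => by rw [h] at hz; simp at hz
    have h1 := hYL _ hs
    rw [Lam_split K hs, add_sub_cancel_left] at h1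
    have hP : PP K (1 + z) = 1 / z - deriv Y (1 + z) / Y (1 + z) - RR K (1 + z) := by
      rw [← h1]; ring
    have B0 : 0 ≤ B := by
      have := hB 1 le_rfl
      have h2 := abs_nonneg (Th K 1)
      linarith
    have hIntg := (laplace_diff (fun u => Th K (Real.exp u)) ((Th_mono K).measurable.comp Real.measurable_exp)
      (θ := 1) B0 (fun u hu => by rw [one_mul]; exact hB _ (Real.one_le_exp hu)) (1 + z) hs).1
    have hIntg2 : IntegrableOn (fun u : ℝ => Complex.exp (-z * u)) (Set.Ici 0) := by
      rw [integrableOn_Ici_iff_integrableOn_Ioi]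
      exact integrableOn_exp_mul_complex_Ioi (by simpa using hz) 0
    have e : ∀ u : ℝ, ((Th K (Real.exp u) * Real.exp (-u) - 1 : ℝ) : ℂ) * Complex.exp (-z * u) =
        (Th K (Real.exp u) : ℂ) * Complex.exp (-(1 + z) * u) - Complex.exp (-z * u) := by
      intro u
      have : Complex.exp (-(1 + z) * u) = Complex.exp (-u) * Complex.exp (-z * u) := by
        rw [← Complex.exp_add]; congr 1; ring
      rw [this]; push_cast; ring
    simp_rw [e]
    rw [integral_sub hIntg hIntg2, PP_conv K hs, hP, integral_Ici_eq_integral_Ioi,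
      integral_exp_mul_complex_Ioi (by simpa using hz) 0]
    simp only [Complex.ofReal_zero, mul_zero, Complex.exp_zero, neg_div_neg_eq]
    field_simp
    ring

end PIT

end

namespace PIT
open Filter Topology MeasureTheory NumberField IsDedekindDomain
open scoped nonZeroDivisors

variable (K : Type*) [Field K] [NumberField K]

/-- prime counting function -/
noncomputable def pik (x : ℝ) : ℝ := ((nP_fin K x).toFinset.card : ℝ)

theorem pik_le (x : ℝ) : pik K x * Real.log 2 ≤ Th K x := by
  unfold pik Th
  rw [← nsmul_eq_mul]
  exact Finset.card_nsmul_le_sum _ _ _ fun p _ => Real.log_le_log (by norm_num) (two_le_nP K p)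

theorem Th_le_pik {x : ℝ} : Th K x ≤ pik K x * Real.log x := by
  unfold pik Th
  rw [← nsmul_eq_mul]
  refine Finset.sum_le_card_nsmul _ _ _ fun p hp => ?_
  have hp : nP K p ≤ x := by simpa using hp
  exact Real.log_le_log (by linarith [two_le_nP K p]) hp

theorem pik_split {x y : ℝ} (hy : 1 ≤ y) : pik K x * Real.log y ≤ pik K y * Real.log y + Th K x := by
  classical
  set S := (nP_fin K x).toFinset with hS
  set T := (nP_fin K y).toFinset with hT
  have h5 : (S.card : ℝ) ≤ (S \ T).card + T.card := by
    have := Finset.le_card_sdiff T S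
    have : S.card ≤ (S \ T).card + T.card := by omega
    exact_mod_cast this
  have h6 : ((S \ T).card : ℝ) * Real.log y ≤ Th K x := by
    rw [← nsmul_eq_mul]
    refine (Finset.card_nsmul_le_sum _ (fun p => Real.log (nP K p)) _ fun p hp => ?_).trans
      (Finset.sum_le_sum_of_subset_of_nonneg Finset.sdiff_subset fun p _ _ => (log_nP_pos K p).le)
    have hp : y < nP K p := by
      have := (Finset.mem_sdiff.mp hp).2
      simpa [hT] using this
    exact Real.log_le_log (by linarith) hp.le
  have := mul_le_mul_of_nonneg_right h5 (Real.log_nonneg hy)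
  unfold pik
  rw [← hS, ← hT]
  linarith

theorem pik_diff : Tendsto (fun x => (pik K x * Real.log x - Th K x) / x) atTop (𝓝 0) := by
  obtain ⟨B, hB⟩ := Th_le K
  have B0 : 0 ≤ B := by
    have := hB 1 le_rfl
    have h2 := abs_nonneg (Th K 1)
    linarith
  have l2 : 0 < Real.log 2 := Real.log_pos (by norm_num)
  rw [Metric.tendsto_atTop']
  intro ε ε0
  set η := ε / (2 * (B + 1)) with hη
  have η0 : 0 < η := by positivity
  have hηB : η * B ≤ ε / 2 := by
    rw [hη, div_mul_eq_mul_div, div_le_div_iff₀ (by positivity) (by norm_num)]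
    nlinarith
  set a := 1 / (1 + η) with ha
  have a0 : 0 < a := by positivity
  have a1 : a < 1 := by rw [ha, div_lt_one (by positivity)]; linarith
  have hlim : Tendsto (fun x : ℝ => B / Real.log 2 * (Real.log x / x ^ (1 - a))) atTop
      (𝓝 (B / Real.log 2 * 0)) :=
    ((isLittleO_log_rpow_atTop (by linarith : 0 < 1 - a)).tendsto_div_nhds_zero).const_mul _
  rw [mul_zero] at hlim
  obtain ⟨X, hX⟩ := eventually_atTop.mp (hlim.eventually (gt_mem_nhds (by linarith : 0 < ε / 2)))
  refine ⟨max X 1, fun x hx => ?_⟩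
  have hx1 : 1 < x := (le_max_right _ _).trans_lt hx
  have x0 : 0 < x := by linarith
  have hxX := hX x ((le_max_left _ _).trans hx.le)
  have hT := Th_le_pik K (x := x)
  rw [Real.dist_eq, sub_zero, abs_of_nonneg (div_nonneg (by linarith) x0.le)]
  have hy : 1 ≤ x ^ a := Real.one_le_rpow hx1.le a0.le
  have h1 := pik_split K (x := x) hy
  rw [Real.log_rpow x0] at h1
  have lx : 0 < Real.log x := Real.log_pos hx1
  have h2 : pik K (x ^ a) ≤ B / Real.log 2 * x ^ a := by
    have h3 := (pik_le K (x ^ a)).trans ((le_abs_self _).trans (hB _ hy))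
    rw [div_mul_eq_mul_div, le_div_iff₀ l2]
    exact h3
  have h4 : pik K x * Real.log x ≤ pik K (x ^ a) * Real.log x + (1 + η) * Th K x := by
    have h5 := mul_le_mul_of_nonneg_left h1 (by positivity : 0 ≤ 1 + η)
    have h6 : (1 + η) * a = 1 := by rw [ha]; field_simp
    calc _ = (1 + η) * a * (pik K x * Real.log x) := by rw [h6, one_mul]
      _ = (1 + η) * (pik K x * (a * Real.log x)) := by ring
      _ ≤ _ := h5
      _ = (1 + η) * a * (pik K (x ^ a) * Real.log x) + (1 + η) * Th K x := by ring
      _ = _ := by rw [h6, one_mul]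
  have h7 : Th K x ≤ B * x := (le_abs_self _).trans (hB x hx1.le)
  have h8 : pik K x * Real.log x - Th K x ≤ B / Real.log 2 * x ^ a * Real.log x + η * (B * x) := by
    have := mul_le_mul_of_nonneg_right h2 lx.le
    have := mul_le_mul_of_nonneg_left h7 η0.le
    linarith
  rw [div_lt_iff₀ x0]
  have h9 : B / Real.log 2 * x ^ a * Real.log x = B / Real.log 2 * (Real.log x / x ^ (1 - a)) * x := by
    rw [Real.rpow_sub x0, Real.rpow_one]
    have : 0 < x ^ a := Real.rpow_pos_of_pos x0 a
    field_simp
  rw [h9] at h8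
  have := mul_lt_mul_of_pos_right hxX x0
  have := mul_le_mul_of_nonneg_right hηB x0.le
  linarith

theorem final (s : HeightOneSpectrum (𝓞 K) → ℝ) (M : ℝ)
    (hs_nonneg : ∀ p, 0 ≤ s p) (hs_bdd : ∀ p, s p ≤ M) (L : ℝ)
    (hD : Tendsto (fun N : ℝ => (∑ p ∈ (nP_fin K N).toFinset, s p) / pik K N) atTop (𝓝 L)) :
    Tendsto (fun N : ℝ => (∑ p ∈ (nP_fin K N).toFinset, s p * Real.log (nP K p)) / N) atTop (𝓝 L) := by
  have h0 := pik_diff K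
  have h1 := h0.add (Th_asymp K)
  have h2 : Tendsto (fun x => pik K x * Real.log x / x) atTop (𝓝 1) := by
    rw [zero_add] at h1
    refine h1.congr fun x => ?_
    ring
  have h3 : Tendsto (fun N : ℝ => ((∑ p ∈ (nP_fin K N).toFinset, s p) * Real.log N -
      ∑ p ∈ (nP_fin K N).toFinset, s p * Real.log (nP K p)) / N) atTop (𝓝 0) := by
    have h4 := h0.const_mul M
    rw [mul_zero] at h4
    refine squeeze_zero' ?_ ?_ h4
    · filter_upwards [eventually_gt_atTop 0] with N hN
      refine div_nonneg ?_ hN.le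
      rw [Finset.sum_mul, ← Finset.sum_sub_distrib]
      refine Finset.sum_nonneg fun p hp => ?_
      have hp : nP K p ≤ N := by simpa using hp
      have := Real.log_le_log (by linarith [two_le_nP K p]) hp
      rw [← mul_sub]
      exact mul_nonneg (hs_nonneg p) (by linarith)
    · filter_upwards [eventually_gt_atTop 0] with N hN
      rw [← mul_div_assoc]
      gcongr
      unfold pik Th
      rw [Finset.sum_mul, ← Finset.sum_sub_distrib, ← nsmul_eq_mul, ← Finset.sum_const,
        ← Finset.sum_sub_distrib, Finset.mul_sum]
      refine Finset.sum_le_sum fun p hp => ?_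
      have hp : nP K p ≤ N := by simpa using hp
      have := Real.log_le_log (by linarith [two_le_nP K p]) hp
      rw [← mul_sub]
      exact mul_le_mul_of_nonneg_right (hs_bdd p) (by linarith)
  have h5 := (hD.mul h2).sub h3
  rw [mul_one, sub_zero] at h5
  refine h5.congr fun N => ?_
  by_cases hp : pik K N = 0
  · have : (nP_fin K N).toFinset = ∅ := by
      unfold pik at hp
      exact Finset.card_eq_zero.mp (by exact_mod_cast hp)
    rw [this]; simp
  · field_simp
    ring

end PIT

open Filter IsDedekindDomain

/-- Let `k` be a number field and `s` a family of nonnegative real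
numbers indexed by the nonzero prime ideals of the ring of integers of `k`, bounded
above by `M`.  If `D_N / π_k(N)` converges to `L` as `N → ∞`, then `C_N / N` also
converges to `L`, where
`C_N = Σ_{𝔭 : N(𝔭) ≤ N} s_𝔭 log N(𝔭)`, `D_N = Σ_{𝔭 : N(𝔭) ≤ N} s_𝔭` and
`π_k(N) = #{𝔭 : N(𝔭) ≤ N}`. -/
theorem nagao_lemma_forward
    (k : Type*) [Field k] [NumberField k]
    (s : HeightOneSpectrum (NumberField.RingOfIntegers k) → ℝ)
    (M : ℝ)
    (hs_nonneg : ∀ p, 0 ≤ s p)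
    (hs_bdd : ∀ p, s p ≤ M)
    (L : ℝ)
    (hD : Tendsto
      (fun N : ℝ =>
        (∑ᶠ p ∈ {p : HeightOneSpectrum (NumberField.RingOfIntegers k) |
            (Ideal.absNorm p.asIdeal : ℝ) ≤ N}, s p) /
        (({p : HeightOneSpectrum (NumberField.RingOfIntegers k) |
            (Ideal.absNorm p.asIdeal : ℝ) ≤ N}).ncard : ℝ))
      atTop (nhds L)) :
    Tendsto
      (fun N : ℝ =>
        (∑ᶠ p ∈ {p : HeightOneSpectrum (NumberField.RingOfIntegers k) |
            (Ideal.absNorm p.asIdeal : ℝ) ≤ N},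
          s p * Real.log (Ideal.absNorm p.asIdeal)) / N)
      atTop (nhds L) := by
  refine (PIT.final k s M hs_nonneg hs_bdd L (hD.congr fun N => ?_)).congr fun N => ?_
  · have hf : {p : HeightOneSpectrum (NumberField.RingOfIntegers k) |
        (Ideal.absNorm p.asIdeal : ℝ) ≤ N}.Finite := PIT.nP_fin k N
    rw [finsum_mem_eq_finite_toFinset_sum _ hf, Set.ncard_eq_toFinset_card _ hf]
    rfl
  · have hf : {p : HeightOneSpectrum (NumberField.RingOfIntegers k) |
        (Ideal.absNorm p.asIdeal : ℝ) ≤ N}.Finite := PIT.nP_fin k N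
    rw [finsum_mem_eq_finite_toFinset_sum _ hf]
    rfl
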